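/- arXiv:1007.1178 — 7 statements merged into one kernel-verified Lean document; each statement's English description precedes it below -/
import Mathlib

section
/- Let H₁ and H₂ be triangular line graphs with H₁ a triangle-induced subgraph of H₂. Then for every preimage G₂ of H₂ with edge-to-vertex bijection f₂ : E(G₂) → V(H₂) realizing T(G₂) ≅ H₂, the subgraph G₁ of G₂ induced by the edge set f₂⁻¹(V(H₁)) is a preimage of H₁: T(G₁) ≅ H₁ via the restriction of f₂ to E(G₁). -/
open SimpleGraph

/-- The triangular line graph `T(G)` of a graph `G`: vertices are the edges of `G`,
with two edges adjacent iff they share an endpoint and lie in a common triangle. -/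
def TriLine {V : Type*} (G : SimpleGraph V) : SimpleGraph G.edgeSet where
  Adj e₁ e₂ := ∃ u v w : V, G.Adj u v ∧ G.Adj v w ∧ G.Adj u w ∧
      (e₁ : Sym2 V) = s(u, v) ∧ (e₂ : Sym2 V) = s(v, w)
  symm := by
    constructor
    rintro e₁ e₂ ⟨u, v, w, huv, hvw, huw, h₁, h₂⟩
    exact ⟨w, v, u, hvw.symm, huv.symm, huw.symm, by rw [h₂]; exact Sym2.eq_swap,
      by rw [h₁]; exact Sym2.eq_swap⟩
  loopless := by
    constructor
    rintro e ⟨u, v, w, huv, hvw, huw, h₁, h₂⟩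
    rw [h₁, Sym2.eq_iff] at h₂
    rcases h₂ with ⟨h, _⟩ | ⟨h, _⟩
    · exact huv.ne h
    · exact huw.ne h

/-- `H` is a triangular line graph: it is isomorphic to `T(G)` for some finite graph `G`. -/
def IsTriLineGraph {W : Type*} (H : SimpleGraph W) : Prop :=
  ∃ (V : Type) (_ : Fintype V) (G : SimpleGraph V), Nonempty (TriLine G ≃g H)

/-- Given a preimage `G` of `H` (via the isomorphism `f : T(G) ≃g H`) and a set `S` of
vertices of `H`, this is the subgraph of `G` consisting of the edges of `G` corresponding
to the vertices in `S` (together with their endpoints); i.e. `T⁻¹(S)`. -/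
def edgePre {V W : Type*} (G : SimpleGraph V) {H : SimpleGraph W}
    (f : TriLine G ≃g H) (S : Set W) : G.Subgraph where
  verts := {v | ∃ (u : V) (e : G.edgeSet), (e : Sym2 V) = s(v, u) ∧ (f e : W) ∈ S}
  Adj a b := G.Adj a b ∧ ∃ e : G.edgeSet, (e : Sym2 V) = s(a, b) ∧ (f e : W) ∈ S
  adj_sub h := h.1
  edge_vert := by
    rintro a b ⟨h, e, he, hS⟩
    exact ⟨b, e, he, hS⟩
  symm := by
    constructor
    rintro a b ⟨h, e, he, hS⟩
    exact ⟨h.symm, e, he.trans Sym2.eq_swap, hS⟩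

/-- `A` occurs as a (not necessarily induced) subgraph of `B`. -/
def HasSubgraphIso {α β : Type*} (A : SimpleGraph α) (B : SimpleGraph β) : Prop :=
  ∃ f : α → β, Function.Injective f ∧ ∀ a b, A.Adj a b → B.Adj (f a) (f b)

/-- Glue a graph along an identification relation `R`: the quotient graph on
the quotient of the vertex set by the equivalence generated by `R`. -/
def Glue {ι : Type*} (G : SimpleGraph ι) (R : ι → ι → Prop) :
    SimpleGraph (Quotient (Relation.EqvGen.setoid R)) :=
  SimpleGraph.fromRel (fun x y => ∃ a b : ι, G.Adj a b ∧ x = Quotient.mk _ a ∧ y = Quotient.mk _ b)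

/-- The `k`-wheel: a `k`-cycle plus a dominating center vertex (`none`). -/
def wheelGraph (k : ℕ) : SimpleGraph (Option (ZMod k)) :=
  SimpleGraph.fromRel (fun a b =>
    (∃ i : ZMod k, a = some i ∧ b = some (i + 1)) ∨ (a = none ∧ b ≠ none))

/-- The squared `k`-cycle: a `k`-cycle plus edges between vertices at distance two. -/
def squaredCycleGraph (k : ℕ) : SimpleGraph (ZMod k) :=
  SimpleGraph.fromRel (fun i j => j = i + 1 ∨ j = i + 2)

/-- The `k`-sun: a `k`-cycle (the `Sum.inl` vertices), with a new vertex (`Sum.inr i`)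
for each cycle edge `{i, i+1}`, adjacent to both its endpoints. -/
def sunGraph (k : ℕ) : SimpleGraph (ZMod k ⊕ ZMod k) :=
  SimpleGraph.fromRel (fun a b => ∃ i : ZMod k,
    (a = Sum.inl i ∧ b = Sum.inl (i + 1)) ∨
    (a = Sum.inr i ∧ b = Sum.inl i) ∨
    (a = Sum.inr i ∧ b = Sum.inl (i + 1)))

/-- `H₁` is a triangle-induced subgraph of `H₂`: it is an induced subgraph, and whenever
an edge of `H₁` lies in a triangle of `H₂`, the third vertex of that triangle is in `H₁`. -/
def IsTriangleInduced {W : Type*} (H₂ : SimpleGraph W) (H₁ : H₂.Subgraph) : Prop :=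
  H₁.IsInduced ∧
    ∀ u v w : W, H₁.Adj u v → H₂.Adj u v → H₂.Adj v w → H₂.Adj u w → w ∈ H₁.verts

/-- If `H₁` and `H₂` are triangular line graphs with `H₁` a triangle-induced subgraph of
`H₂`, then for every preimage `G₂` of `H₂` with edge-to-vertex bijection
`f₂ : T(G₂) ≃g H₂`, the subgraph `G₁` of `G₂` induced by the edge set `f₂⁻¹(V(H₁))` is a
preimage of `H₁` via the restriction of `f₂`. -/
theorem triangleInduced_preimage {W : Type} (H₂ : SimpleGraph W) (H₁ : H₂.Subgraph)
    (hH₂ : IsTriLineGraph H₂) (hH₁ : IsTriLineGraph H₁.coe)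
    (hTI : IsTriangleInduced H₂ H₁)
    {V : Type} [Fintype V] (G₂ : SimpleGraph V) (f₂ : TriLine G₂ ≃g H₂) :
    ∀ F : Set (Sym2 V),
      F = {e : Sym2 V | ∃ h : e ∈ G₂.edgeSet, (f₂ ⟨e, h⟩ : W) ∈ H₁.verts} →
      ∃ iso : TriLine (SimpleGraph.fromEdgeSet F) ≃g H₁.coe,
        ∀ (e : Sym2 V) (h₁ : e ∈ (SimpleGraph.fromEdgeSet F).edgeSet)
          (h₂ : e ∈ G₂.edgeSet), (iso ⟨e, h₁⟩ : W) = f₂ ⟨e, h₂⟩ := by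
  intro F hF
  subst hF
  obtain ⟨hI, hT⟩ := hTI
  set F : Set (Sym2 V) :=
    {e : Sym2 V | ∃ h : e ∈ G₂.edgeSet, (f₂ ⟨e, h⟩ : W) ∈ H₁.verts} with hF
  have hmem : ∀ e : Sym2 V, e ∈ (SimpleGraph.fromEdgeSet F).edgeSet ↔ e ∈ F := by
    intro e
    rw [SimpleGraph.edgeSet_fromEdgeSet]
    constructor
    · exact fun h => h.1
    · intro h
      exact ⟨h, fun hd => G₂.not_isDiag_of_mem_edgeSet h.1 hd⟩
  have hadj : ∀ a b : V, (SimpleGraph.fromEdgeSet F).Adj a b ↔ s(a, b) ∈ F := by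
    intro a b
    rw [← SimpleGraph.mem_edgeSet, hmem]
  let eqv : (SimpleGraph.fromEdgeSet F).edgeSet ≃ H₁.verts :=
    { toFun := fun e => ⟨f₂ ⟨e.1, ((hmem e.1).1 e.2).1⟩, ((hmem e.1).1 e.2).2⟩
      invFun := fun w => ⟨(f₂.symm w.1).1, (hmem _).2 ⟨(f₂.symm w.1).2, by
        simp⟩⟩
      left_inv := by
        intro e
        apply Subtype.ext
        simp
      right_inv := by
        intro w
        apply Subtype.ext
        simp }
  refine ⟨⟨eqv, ?_⟩, fun e h₁ h₂ => rfl⟩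
  intro e₁ e₂
  have m₁ := (hmem e₁.1).1 e₁.2
  have m₂ := (hmem e₂.1).1 e₂.2
  change H₁.Adj (f₂ ⟨e₁.1, m₁.1⟩) (f₂ ⟨e₂.1, m₂.1⟩) ↔ _
  constructor
  · intro h
    have h2 := h.adj_sub
    obtain ⟨u, v, w, huv, hvw, huw, k₁, k₂⟩ := f₂.map_rel_iff.1 h2
    refine ⟨u, v, w, (hadj _ _).2 ?_, (hadj _ _).2 ?_, (hadj _ _).2 ?_, k₁, k₂⟩
    · rw [← k₁]; exact m₁
    · rw [← k₂]; exact m₂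
    · refine ⟨huw, hT _ _ _ h h2 (f₂.map_rel_iff.2 ?_) (f₂.map_rel_iff.2 ?_)⟩
      · exact ⟨v, w, u, hvw, huw.symm, huv.symm, k₂, Sym2.eq_swap⟩
      · exact ⟨v, u, w, huv.symm, huw, hvw, k₁.trans Sym2.eq_swap, rfl⟩
  · rintro ⟨u, v, w, huv, hvw, huw, k₁, k₂⟩
    refine hI m₁.2 m₂.2 (f₂.map_rel_iff.2 ?_)
    exact ⟨u, v, w, ((hadj _ _).1 huv).1, ((hadj _ _).1 hvw).1, ((hadj _ _).1 huw).1, k₁, k₂⟩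
end

section
/- Let G be any finite simple graph and H = T(G) its triangular line graph. Then any triangle-induced subgraph H′ of H is also a triangular line graph, and moreover H′ has a preimage G′ that is a subgraph of G. -/
open SimpleGraph

/-- The preimage subgraph of a set of vertices of the triangular line graph. -/
def preG {V : Type} (G : SimpleGraph V) (S : Set G.edgeSet) : SimpleGraph V where
  Adj a b := ∃ h : G.Adj a b, (⟨s(a, b), h⟩ : G.edgeSet) ∈ S
  symm := by
    constructor
    rintro a b ⟨h, hS⟩
    refine ⟨h.symm, ?_⟩
    have : (⟨s(b, a), h.symm⟩ : G.edgeSet) = ⟨s(a, b), h⟩ := Subtype.ext Sym2.eq_swap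
    rw [this]; exact hS
  loopless := by
    constructor
    rintro a ⟨h, _⟩
    exact h.ne rfl

theorem preG_mem {V : Type} (G : SimpleGraph V) (S : Set G.edgeSet) (e : Sym2 V) :
    e ∈ (preG G S).edgeSet ↔ ∃ h : e ∈ G.edgeSet, (⟨e, h⟩ : G.edgeSet) ∈ S := by
  induction e using Sym2.ind with
  | _ a b => exact Iff.rfl

/-- The bijection between edges of the preimage and the set. -/
def preEquiv {V : Type} (G : SimpleGraph V) (S : Set G.edgeSet) :
    (preG G S).edgeSet ≃ S where
  toFun e := ⟨⟨e.1, ((preG_mem G S e.1).1 e.2).1⟩, ((preG_mem G S e.1).1 e.2).2⟩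
  invFun x := ⟨x.1.1, (preG_mem G S x.1.1).2 ⟨x.1.2, x.2⟩⟩
  left_inv _ := rfl
  right_inv _ := rfl

theorem preG_iso {V : Type} (G : SimpleGraph V)
    (H' : (TriLine G).Subgraph) (h : IsTriangleInduced (TriLine G) H') :
    Nonempty (TriLine (preG G H'.verts) ≃g H'.coe) := by
  refine ⟨⟨preEquiv G H'.verts, ?_⟩⟩
  intro e₁ e₂
  obtain ⟨hI, hT⟩ := h
  have m₁ := (preEquiv G H'.verts e₁).2
  have m₂ := (preEquiv G H'.verts e₂).2
  constructor
  · intro hadj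
    have hadj' : H'.Adj (preEquiv G H'.verts e₁).1 (preEquiv G H'.verts e₂).1 := hadj
    have hG := H'.adj_sub hadj'
    obtain ⟨u, v, w, huv, hvw, huw, h₁, h₂⟩ := hG
    have h₁' : (e₁ : Sym2 V) = s(u, v) := h₁
    have h₂' : (e₂ : Sym2 V) = s(v, w) := h₂
    have a₁ : (preG G H'.verts).Adj u v := by
      have := e₁.2; rw [h₁'] at this; exact this
    have a₂ : (preG G H'.verts).Adj v w := by
      have := e₂.2; rw [h₂'] at this; exact this
    refine ⟨u, v, w, a₁, a₂, ⟨huw, ?_⟩, h₁', h₂'⟩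
    refine hT _ _ ⟨s(u, w), huw⟩ hadj' (H'.adj_sub hadj') ?_ ?_
    · exact ⟨v, w, u, hvw, huw.symm, huv.symm, h₂, Sym2.eq_swap⟩
    · exact ⟨v, u, w, huv.symm, huw, hvw, h₁.trans Sym2.eq_swap, rfl⟩
  · rintro ⟨u, v, w, ⟨huv, _⟩, ⟨hvw, _⟩, ⟨huw, _⟩, h₁, h₂⟩
    exact hI m₁ m₂ ⟨u, v, w, huv, hvw, huw, h₁, h₂⟩

/-- Any triangle-induced subgraph `H'` of a triangular line graph `H = T(G)` is itself a
triangular line graph, with a preimage `G'` that is a subgraph of `G`. -/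
theorem triangleInduced_isTriLineGraph {V : Type} [Fintype V] (G : SimpleGraph V)
    (H' : (TriLine G).Subgraph) (h : IsTriangleInduced (TriLine G) H') :
    IsTriLineGraph H'.coe ∧
      ∃ G' : SimpleGraph V, G' ≤ G ∧ Nonempty (TriLine G' ≃g H'.coe) := by
  have hiso := preG_iso G H' h
  exact ⟨⟨V, inferInstance, _, hiso⟩, preG G H'.verts, fun _ _ hab => hab.1, hiso⟩
end

section
/- For every integer k ≥ 7, the triangular line graph of the k-wheel W_k is isomorphic to the k-sun S_k. -/
open SimpleGraph

theorem triLine_aux {V : Type*} (G : SimpleGraph V) {a b c d : V} (h1 : G.Adj a b)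
    (h2 : G.Adj c d) :
    (TriLine G).Adj ⟨s(a, b), h1⟩ ⟨s(c, d), h2⟩ ↔
      (a = c ∧ G.Adj b d) ∨ (a = d ∧ G.Adj b c) ∨ (b = c ∧ G.Adj a d) ∨ (b = d ∧ G.Adj a c) := by
  simp only [TriLine]
  constructor
  · rintro ⟨u, v, w, huv, hvw, huw, e1, e2⟩
    rw [Sym2.eq_iff] at e1 e2
    rcases e1 with ⟨rfl, rfl⟩ | ⟨rfl, rfl⟩ <;> rcases e2 with ⟨rfl, rfl⟩ | ⟨rfl, rfl⟩ <;> simp [huw]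
  · rintro (⟨rfl, h⟩ | ⟨rfl, h⟩ | ⟨rfl, h⟩ | ⟨rfl, h⟩)
    · exact ⟨b, a, d, h1.symm, h2, h, Sym2.eq_swap, rfl⟩
    · exact ⟨b, a, c, h1.symm, h2.symm, h, Sym2.eq_swap, Sym2.eq_swap⟩
    · exact ⟨a, b, d, h1, h2, h, rfl, rfl⟩
    · exact ⟨a, b, c, h1, h2.symm, h, rfl, Sym2.eq_swap⟩

theorem wheel_none_some (k : ℕ) (i : ZMod k) : (wheelGraph k).Adj none (some i) := by
  simp [wheelGraph]

theorem wheel_some_none (k : ℕ) (i : ZMod k) : (wheelGraph k).Adj (some i) none :=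
  (wheel_none_some k i).symm

theorem wheel_some_some (k : ℕ) (h : (1 : ZMod k) ≠ 0) (i j : ZMod k) :
    (wheelGraph k).Adj (some i) (some j) ↔ j = i + 1 ∨ i = j + 1 := by
  simp only [wheelGraph, SimpleGraph.fromRel_adj]
  constructor
  · rintro ⟨-, (⟨l, h1, h2⟩ | h) | (⟨l, h1, h2⟩ | h)⟩ <;> simp_all
  · rintro (rfl | rfl) <;> simp [h]

def sunEdge (k : ℕ) (h : (1 : ZMod k) ≠ 0) : ZMod k ⊕ ZMod k → (wheelGraph k).edgeSet
  | Sum.inl i => ⟨s(none, some i), wheel_none_some k i⟩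
  | Sum.inr i => ⟨s(some i, some (i + 1)), (wheel_some_some k h _ _).2 (Or.inl rfl)⟩

theorem sunEdge_bij (k : ℕ) (h : (1 : ZMod k) ≠ 0) (h2 : (2 : ZMod k) ≠ 0) :
    Function.Bijective (sunEdge k h) := by
  constructor
  · rintro (i | i) (j | j) e <;> replace e := congrArg Subtype.val e <;>
      simp only [sunEdge, Sym2.eq_iff] at e
    · simp_all
    · simp at e
    · simp at e
    · simp only [Option.some.injEq] at e
      rcases e with ⟨rfl, _⟩ | ⟨rfl, e⟩
      · rfl
      · exact absurd (by linear_combination e) h2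
  · rintro ⟨e, he⟩
    induction e using Sym2.ind with
    | _ a b =>
      have hab : (wheelGraph k).Adj a b := he
      rcases a with _ | i <;> rcases b with _ | j
      · exact absurd rfl hab.ne
      · exact ⟨Sum.inl j, rfl⟩
      · exact ⟨Sum.inl i, Subtype.ext Sym2.eq_swap⟩
      · rcases (wheel_some_some k h _ _).1 hab with rfl | rfl
        · exact ⟨Sum.inr i, rfl⟩
        · exact ⟨Sum.inr j, Subtype.ext Sym2.eq_swap⟩

theorem sunEdge_adj (k : ℕ) (h : (1 : ZMod k) ≠ 0) (h2 : (2 : ZMod k) ≠ 0)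
    (h3 : (3 : ZMod k) ≠ 0) (x y : ZMod k ⊕ ZMod k) :
    (TriLine (wheelGraph k)).Adj (sunEdge k h x) (sunEdge k h y) ↔ (sunGraph k).Adj x y := by
  rcases x with i | i <;> rcases y with j | j <;>
    simp only [sunEdge, triLine_aux, wheel_some_some k h, wheel_none_some, wheel_some_none,
      sunGraph, SimpleGraph.fromRel_adj, Option.some.injEq, reduceCtorEq, Sum.inl.injEq,
      Sum.inr.injEq, false_and, and_false, false_or, or_false, true_and, and_true, ne_eq,
      not_false_eq_true, exists_false]
  · constructor
    · rintro ((rfl | rfl) | ⟨-, e⟩)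
      · simp [h]
      · simp [h]
      · exact absurd rfl e.ne
    · rintro ⟨-, ⟨l, rfl, rfl⟩ | ⟨l, rfl, rfl⟩⟩ <;> simp
  · constructor
    · rintro (rfl | rfl)
      · exact ⟨i, by simp⟩
      · exact ⟨j, by simp⟩
    · rintro ⟨l, ⟨rfl, rfl⟩ | ⟨rfl, rfl⟩⟩ <;> simp
  · constructor
    · rintro (rfl | rfl)
      · exact ⟨i, by simp⟩
      · exact ⟨i, by simp⟩
    · rintro ⟨l, ⟨rfl, rfl⟩ | ⟨rfl, rfl⟩⟩ <;> simp
  · simp only [or_self, iff_false]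
    rintro (⟨rfl, e | e⟩ | ⟨rfl, e | e⟩ | ⟨rfl, e | e⟩ | ⟨e', e | e⟩)
    · exact h (by linear_combination -e)
    · exact h (by linear_combination -e)
    · exact h3 (by linear_combination -e)
    · exact h (by linear_combination e)
    · exact h (by linear_combination e)
    · exact h3 (by linear_combination -e)
    · exact h (by linear_combination -e' - e)
    · exact h (by linear_combination e' - e)

/-- For every `k ≥ 7`, the triangular line graph of the `k`-wheel is isomorphic to the `k`-sun. -/
theorem triLine_wheel_iso_sun (k : ℕ) (hk : 7 ≤ k) :
    Nonempty (TriLine (wheelGraph k) ≃g sunGraph k) := by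
  have hne : ∀ n : ℕ, 0 < n → n < 7 → (n : ZMod k) ≠ 0 := by
    intro n h0 h7 hn
    rw [ZMod.natCast_eq_zero_iff] at hn
    have := Nat.le_of_dvd h0 hn
    omega
  have h1 : (1 : ZMod k) ≠ 0 := by simpa using hne 1 (by norm_num) (by norm_num)
  have h2 : (2 : ZMod k) ≠ 0 := by simpa using hne 2 (by norm_num) (by norm_num)
  have h3 : (3 : ZMod k) ≠ 0 := by simpa using hne 3 (by norm_num) (by norm_num)
  refine ⟨SimpleGraph.Iso.symm ⟨Equiv.ofBijective _ (sunEdge_bij k h1 h2), ?_⟩⟩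
  intro x y
  exact sunEdge_adj k h1 h2 h3 x y
end

section
/- For every integer k ≥ 3, the triangular line graph of the k-fan is isomorphic to the triangular line graph of the k-triangle strip; this common triangular line graph is a sequence of k − 1 bowties in which consecutive bowties intersect at a triangle and are otherwise disjoint. -/
open SimpleGraph

/-- The `k`-fan: `k` triangles sharing the common vertex `none`, with consecutive
triangles sharing an edge and otherwise disjoint. -/
def fanGraph (k : ℕ) : SimpleGraph (Option (Fin (k + 1))) :=
  SimpleGraph.fromRel (fun a b =>
    (a = none ∧ b ≠ none) ∨ ∃ i : Fin k, a = some i.castSucc ∧ b = some i.succ)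

/-- The `k`-triangle strip: the square of a path, a chain of `k` triangles where
triangles at distance two share a vertex and farther triangles are disjoint. -/
def stripGraph (k : ℕ) : SimpleGraph (Fin (k + 2)) :=
  SimpleGraph.fromRel (fun a b => (b : ℕ) = (a : ℕ) + 1 ∨ (b : ℕ) = (a : ℕ) + 2)

/-- A chain of `k` triangles in which consecutive triangles share a single vertex:
equivalently, a sequence of `k - 1` bowties in which consecutive bowties intersect at a
triangle and are otherwise disjoint. -/
def triangleChain (k : ℕ) : SimpleGraph (Fin (k + 1) ⊕ Fin k) :=
  SimpleGraph.fromRel (fun a b => ∃ i : Fin k,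
    (a = Sum.inl i.castSucc ∧ b = Sum.inl i.succ) ∨
    (a = Sum.inr i ∧ b = Sum.inl i.castSucc) ∨
    (a = Sum.inr i ∧ b = Sum.inl i.succ))

theorem triLine_adj_aux {V : Type*} (G : SimpleGraph V) (e f : G.edgeSet) (a b c d : V)
    (he : (e : Sym2 V) = s(a, b)) (hf : (f : Sym2 V) = s(c, d)) :
    (TriLine G).Adj e f ↔ (b = c ∧ G.Adj a d) ∨ (b = d ∧ G.Adj a c) ∨
      (a = c ∧ G.Adj b d) ∨ (a = d ∧ G.Adj b c) := by
  have hab : G.Adj a b := by have := e.2; rwa [he] at this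
  have hcd : G.Adj c d := by have := f.2; rwa [hf] at this
  constructor
  · rintro ⟨u, v, w, huv, hvw, huw, h1, h2⟩
    rw [he, Sym2.eq_iff] at h1
    rw [hf, Sym2.eq_iff] at h2
    rcases h1 with ⟨rfl, rfl⟩ | ⟨rfl, rfl⟩ <;> rcases h2 with ⟨rfl, rfl⟩ | ⟨rfl, rfl⟩ <;> simp [huw]
  · rintro (⟨rfl, h⟩ | ⟨rfl, h⟩ | ⟨rfl, h⟩ | ⟨rfl, h⟩)
    · exact ⟨a, b, d, hab, hcd, h, he, hf⟩
    · exact ⟨a, b, c, hab, hcd.symm, h, he, hf.trans Sym2.eq_swap⟩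
    · exact ⟨b, a, d, hab.symm, hcd, h, he.trans Sym2.eq_swap, hf⟩
    · exact ⟨b, a, c, hab.symm, hcd.symm, h, he.trans Sym2.eq_swap, hf.trans Sym2.eq_swap⟩

theorem chain_iso_aux {V W : Type*} (G : SimpleGraph V) (H : SimpleGraph W) (p q : W → V)
    (hadj : ∀ x, G.Adj (p x) (q x))
    (hinj : ∀ x y, s(p x, q x) = s(p y, q y) → x = y)
    (hsurj : ∀ a b, G.Adj a b → ∃ x, s(p x, q x) = s(a, b))
    (hiff : ∀ x y, ((q x = p y ∧ G.Adj (p x) (q y)) ∨ (q x = q y ∧ G.Adj (p x) (p y)) ∨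
      (p x = p y ∧ G.Adj (q x) (q y)) ∨ (p x = q y ∧ G.Adj (q x) (p y))) ↔ H.Adj x y) :
    Nonempty (H ≃g TriLine G) := by
  let φ : W → G.edgeSet := fun x => ⟨s(p x, q x), hadj x⟩
  have hb : Function.Bijective φ := by
    constructor
    · intro x y h
      exact hinj x y (congrArg Subtype.val h)
    · rintro ⟨e, he⟩
      induction e using Sym2.ind with
      | _ a b =>
        obtain ⟨x, hx⟩ := hsurj a b he
        exact ⟨x, Subtype.ext hx⟩
  refine ⟨⟨Equiv.ofBijective φ hb, ?_⟩⟩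
  intro x y
  rw [← hiff x y]
  exact triLine_adj_aux G (φ x) (φ y) _ _ _ _ rfl rfl

theorem chain_ll (k : ℕ) (i j : Fin (k + 1)) : (triangleChain k).Adj (Sum.inl i) (Sum.inl j) ↔
    (i : ℕ) + 1 = j ∨ (j : ℕ) + 1 = i := by
  simp only [triangleChain, SimpleGraph.fromRel_adj, ne_eq, Sum.inl.injEq, reduceCtorEq,
    false_and, or_false, Fin.ext_iff, Fin.val_castSucc, Fin.val_succ]
  constructor
  · rintro ⟨_, ⟨m, h⟩ | ⟨m, h⟩⟩ <;> omega
  · rintro (h | h)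
    · exact ⟨by omega, Or.inl ⟨⟨i, by omega⟩, rfl, h.symm⟩⟩
    · exact ⟨by omega, Or.inr ⟨⟨j, by omega⟩, rfl, h.symm⟩⟩

theorem chain_rl (k : ℕ) (i : Fin k) (j : Fin (k + 1)) :
    (triangleChain k).Adj (Sum.inr i) (Sum.inl j) ↔ (j : ℕ) = i ∨ (j : ℕ) = i + 1 := by
  simp only [triangleChain, SimpleGraph.fromRel_adj, ne_eq, Sum.inl.injEq, Sum.inr.injEq,
    reduceCtorEq, false_and, and_false, or_false, false_or, Fin.ext_iff, Fin.val_castSucc,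
    Fin.val_succ, not_false_eq_true, true_and, exists_false]
  constructor
  · rintro ⟨m, h⟩; omega
  · rintro h
    exact ⟨i, by omega⟩

theorem chain_lr (k : ℕ) (i : Fin k) (j : Fin (k + 1)) :
    (triangleChain k).Adj (Sum.inl j) (Sum.inr i) ↔ (j : ℕ) = i ∨ (j : ℕ) = i + 1 := by
  rw [SimpleGraph.adj_comm, chain_rl]

theorem chain_rr (k : ℕ) (i j : Fin k) :
    (triangleChain k).Adj (Sum.inr i) (Sum.inr j) ↔ False := by
  simp [triangleChain]

theorem fan_ns (k : ℕ) (i : Fin (k + 1)) : (fanGraph k).Adj none (some i) ↔ True := by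
  simp [fanGraph]

theorem fan_sn (k : ℕ) (i : Fin (k + 1)) : (fanGraph k).Adj (some i) none ↔ True := by
  simp [fanGraph]

theorem fan_ss (k : ℕ) (i j : Fin (k + 1)) : (fanGraph k).Adj (some i) (some j) ↔
    (i : ℕ) + 1 = j ∨ (j : ℕ) + 1 = i := by
  simp only [fanGraph, SimpleGraph.fromRel_adj, ne_eq, Option.some.injEq, reduceCtorEq,
    false_and, false_or, Fin.ext_iff, Fin.val_castSucc, Fin.val_succ]
  constructor
  · rintro ⟨_, ⟨m, h⟩ | ⟨m, h⟩⟩ <;> omega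
  · rintro (h | h)
    · exact ⟨by omega, Or.inl ⟨⟨i, by omega⟩, rfl, h.symm⟩⟩
    · exact ⟨by omega, Or.inr ⟨⟨j, by omega⟩, rfl, h.symm⟩⟩

theorem strip_adj (k : ℕ) (i j : Fin (k + 2)) : (stripGraph k).Adj i j ↔
    (j : ℕ) = i + 1 ∨ (j : ℕ) = i + 2 ∨ (i : ℕ) = j + 1 ∨ (i : ℕ) = j + 2 := by
  simp only [stripGraph, SimpleGraph.fromRel_adj, ne_eq, Fin.ext_iff]
  omega

theorem fan_iso (k : ℕ) : Nonempty (triangleChain k ≃g TriLine (fanGraph k)) := by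
  refine chain_iso_aux _ _
    (Sum.elim (fun _ => none) (fun i => some i.castSucc))
    (Sum.elim (fun i => some i) (fun i => some i.succ)) ?_ ?_ ?_ ?_
  · rintro (i | i) <;> simp [fan_ns, fan_ss]
  · rintro (i | i) (j | j) <;> simp [Fin.ext_iff] <;> omega
  · rintro (_ | a) (_ | b) h
    · simp at h
    · exact ⟨Sum.inl b, rfl⟩
    · exact ⟨Sum.inl a, Sym2.eq_swap⟩
    · rw [fan_ss] at h
      rcases h with h | h
      · refine ⟨Sum.inr ⟨a, by omega⟩, ?_⟩
        simp [Fin.ext_iff]; omega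
      · refine ⟨Sum.inr ⟨b, by omega⟩, ?_⟩
        simp [Fin.ext_iff]; omega
  · rintro (i | i) (j | j) <;>
      simp [fan_ns, fan_sn, fan_ss, chain_ll, chain_lr, chain_rl, chain_rr, Fin.ext_iff] <;> omega

theorem strip_iso (k : ℕ) : Nonempty (triangleChain k ≃g TriLine (stripGraph k)) := by
  refine chain_iso_aux _ _
    (Sum.elim (fun i => ⟨i, by omega⟩) (fun i => ⟨i, by omega⟩))
    (Sum.elim (fun i => ⟨i + 1, by omega⟩) (fun i => ⟨i + 2, by omega⟩)) ?_ ?_ ?_ ?_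
  · rintro (i | i) <;> simp [strip_adj]
  · rintro (i | i) (j | j) <;> simp [Fin.ext_iff] <;> omega
  · intro a b h
    rw [strip_adj] at h
    rcases h with h | h | h | h
    · refine ⟨Sum.inl ⟨a, by omega⟩, ?_⟩
      simp [Fin.ext_iff]; omega
    · refine ⟨Sum.inr ⟨a, by omega⟩, ?_⟩
      simp [Fin.ext_iff]; omega
    · refine ⟨Sum.inl ⟨b, by omega⟩, ?_⟩
      simp [Fin.ext_iff]; omega
    · refine ⟨Sum.inr ⟨b, by omega⟩, ?_⟩
      simp [Fin.ext_iff]; omega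
  · rintro (i | i) (j | j) <;>
      simp only [Sum.elim_inl, Sum.elim_inr, strip_adj, chain_ll, chain_lr, chain_rl, chain_rr,
        Fin.ext_iff, iff_false] <;> omega

/-- For `k ≥ 3`, the `k`-fan and the `k`-triangle strip have isomorphic triangular line
graphs, and this common triangular line graph is the chain of `k` triangles
(a sequence of `k - 1` bowties, consecutive ones meeting in a triangle). -/
theorem triLine_fan_iso_strip (k : ℕ) (hk : 3 ≤ k) :
    Nonempty (TriLine (fanGraph k) ≃g TriLine (stripGraph k)) ∧
      Nonempty (TriLine (fanGraph k) ≃g triangleChain k) := by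
  obtain ⟨f⟩ := fan_iso k
  obtain ⟨g⟩ := strip_iso k
  exact ⟨⟨f.symm.trans g⟩, ⟨f.symm⟩⟩
end

section
/- Let H be the graph obtained from two 7-suns S and S′ by identifying a bowtie of S with a bowtie of S′ via an EQUAL gadget, and suppose H is a triangular line graph with preimage G. Then the subgraphs T⁻¹(S) and T⁻¹(S′) of G (induced by the edges of G corresponding to the vertices of S and of S′, respectively) are isomorphic: either both are 7-wheels or both are squared 7-cycles. -/
open SimpleGraph

/-- Vertex type of a 7-sun: `Sum.inl i` are the cycle vertices `cᵢ`, and `Sum.inr i` is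
the degree-two vertex `pᵢ` attached to the cycle edge `{cᵢ, cᵢ₊₁}`. -/
abbrev SunV : Type := ZMod 7 ⊕ ZMod 7

/-- Two disjoint copies of the 7-sun: copy `false` is `S` and copy `true` is `S'`. -/
def twoSuns : SimpleGraph (Bool × SunV) :=
  SimpleGraph.fromRel (fun a b => a.1 = b.1 ∧ (sunGraph 7).Adj a.2 b.2)

/-- The EQUAL-gadget identification between the bowtie `{c₀,c₁,c₂,p₀,p₁}` (center `c₁`)
of `S` and the bowtie `{c₀',c₁',c₂',p₀',p₁'}` (center `c₁'`) of `S'`: the centers are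
identified, and in each pair of corresponding triangles the on-cycle vertex of one sun is
identified with the off-cycle vertex of the other. -/
def equalRel : (Bool × SunV) → (Bool × SunV) → Prop := fun x y =>
  (x = (false, Sum.inl 1) ∧ y = (true, Sum.inl 1)) ∨
  (x = (false, Sum.inl 0) ∧ y = (true, Sum.inr 0)) ∨
  (x = (false, Sum.inr 0) ∧ y = (true, Sum.inl 0)) ∨
  (x = (false, Sum.inl 2) ∧ y = (true, Sum.inr 1)) ∨
  (x = (false, Sum.inr 1) ∧ y = (true, Sum.inl 2))

/-- Two 7-suns glued at a bowtie via the EQUAL gadget. -/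
def equalGadget : SimpleGraph (Quotient (Relation.EqvGen.setoid equalRel)) :=
  Glue twoSuns equalRel

/-- The vertices of the glued graph coming from the copy `c` of the 7-sun. -/
def equalSunVerts (c : Bool) : Set (Quotient (Relation.EqvGen.setoid equalRel)) :=
  Set.range (fun v : SunV => Quotient.mk _ (c, v))

def stp (w : ℕ → Bool) : ℕ → ℕ × ℕ
  | 0 => (0, 1)
  | n + 1 => match w n with
    | true => (n + 2, (stp w n).2)
    | false => ((stp w n).1, n + 2)
def ren (a b : ℕ) (s : Bool) (l : ℕ) : ℕ :=
  if l = a then (if s then 1 else 0) else if l = b then (if s then 0 else 1) else l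
/-- letters of the edge labelled `x` (`x < 7`: cycle vertices; `7 ≤ x < 14`: the others) -/
def lab (w : ℕ → Bool) (x : ℕ) : ℕ × ℕ :=
  if x < 7 then stp w x else
    match w (x - 7) with
    | true => ((stp w (x - 7)).1, x - 5)
    | false => ((stp w (x - 7)).2, x - 5)
def rlab (w : ℕ → Bool) (s : Bool) (x : ℕ) : ℕ × ℕ :=
  ((ren (stp w 7).1 (stp w 7).2 s (lab w x).1), (ren (stp w 7).1 (stp w 7).2 s (lab w x).2))
def nadj (x y : ℕ) : Bool :=
  if x < 7 then
    if y < 7 then (x + 7 - y) % 7 != 1 && (x + 7 - y) % 7 != 6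
    else (x + 14 - y) % 7 != 0 && (x + 14 - y) % 7 != 1
  else if y < 7 then (y + 14 - x) % 7 != 0 && (y + 14 - x) % 7 != 1 else true
def same (p q : ℕ × ℕ) : Bool := (p.1 == q.1 && p.2 == q.2) || (p.1 == q.2 && p.2 == q.1)
def tri (p q r : ℕ × ℕ) : Bool :=
  (p.1 == q.1 && same r (p.2, q.2)) || (p.1 == q.2 && same r (p.2, q.1)) ||
  (p.2 == q.1 && same r (p.1, q.2)) || (p.2 == q.2 && same r (p.1, q.1))
def R : List ℕ := List.range 14
def bad (e : ℕ → ℕ × ℕ) : Bool :=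
  (R.any fun i => (List.range i).any fun j => same (e i) (e j)) ||
  (R.any fun i => (List.range i).any fun j => nadj i j && R.any fun k => tri (e i) (e j) (e k))
def wd (a b c d e f g : Bool) : ℕ → Bool := fun n => [a,b,c,d,e,f,g].getD n false
def good (a b c d e f g s : Bool) : Bool :=
  [a,b,c,d,e,f,g,s] == [true,true,true,true,true,true,true,false] ||
  [a,b,c,d,e,f,g,s] == [false,false,false,false,false,false,false,false] ||
  [a,b,c,d,e,f,g,s] == [true,false,true,false,true,false,true,true] ||
  [a,b,c,d,e,f,g,s] == [false,true,false,true,false,true,false,true]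

theorem bad_all : ∀ a b c d e f g s, (good a b c d e f g s || bad (rlab (wd a b c d e f g) s)) = true := by
  decide +kernel

theorem same_sound {V : Type} (φ : ℕ → V) (p q : ℕ × ℕ) (h : same p q = true) :
    s(φ p.1, φ p.2) = s(φ q.1, φ q.2) := by
  simp only [same, Bool.or_eq_true, Bool.and_eq_true, beq_iff_eq] at h
  rcases h with ⟨h1, h2⟩ | ⟨h1, h2⟩
  · rw [h1, h2]
  · rw [h1, h2]; exact Sym2.eq_swap

theorem tri_sound {V : Type} (φ : ℕ → V) (p q r : ℕ × ℕ) (h : tri p q r = true) :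
    ∃ u v w, s(φ p.1, φ p.2) = s(u, v) ∧ s(φ q.1, φ q.2) = s(v, w) ∧ s(φ r.1, φ r.2) = s(u, w) := by
  simp only [tri, Bool.or_eq_true, Bool.and_eq_true, beq_iff_eq] at h
  rcases h with ((⟨h1, h2⟩ | ⟨h1, h2⟩) | ⟨h1, h2⟩) | ⟨h1, h2⟩ <;>
    have h3 := same_sound φ _ _ h2
  · exact ⟨φ p.2, φ p.1, φ q.2, Sym2.eq_swap, by rw [h1], h3⟩
  · exact ⟨φ p.2, φ p.1, φ q.1, Sym2.eq_swap, by rw [h1]; exact Sym2.eq_swap, h3⟩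
  · exact ⟨φ p.1, φ p.2, φ q.2, rfl, by rw [h1], h3⟩
  · exact ⟨φ p.1, φ p.2, φ q.1, rfl, by rw [h1]; exact Sym2.eq_swap, h3⟩

/-- edge number `x` -/
def lbl {α : Type} (c p : ℕ → α) (x : ℕ) : α := if x < 7 then c x else p (x - 7)

theorem bad_false {V : Type} (c p : ℕ → Sym2 V) (e : ℕ → ℕ × ℕ) (φ : ℕ → V)
    (he : ∀ x < 14, lbl c p x = s(φ (e x).1, φ (e x).2))
    (hdist : ∀ i < 14, ∀ j < i, lbl c p i ≠ lbl c p j)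
    (htri : ∀ i < 14, ∀ j < i, ∀ k < 14, nadj i j = true → ∀ u v w, lbl c p i = s(u, v) →
      lbl c p j = s(v, w) → lbl c p k = s(u, w) → False)
    (hb : bad e = true) : False := by
  simp only [bad, R, Bool.or_eq_true, List.any_eq_true, List.mem_range, Bool.and_eq_true] at hb
  rcases hb with ⟨i, hi, j, hj, h⟩ | ⟨i, hi, j, hj, hn, k, hk, h⟩
  · apply hdist i hi j hj
    rw [he i hi, he j (by omega)]
    exact same_sound φ _ _ h
  · obtain ⟨u, v, w, h1, h2, h3⟩ := tri_sound φ _ _ _ h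
    exact htri i hi j hj k hk hn u v w (by rw [he i hi, h1]) (by rw [he j (by omega), h2])
      (by rw [he k hk, h3])

theorem strip {V : Type} (c p : ℕ → Sym2 V)
    (hstep : ∀ n, ∃ u v w, c n = s(u, v) ∧ c (n + 1) = s(v, w) ∧ p n = s(u, w)) :
    ∃ (w : ℕ → Bool) (φ : ℕ → V), ∀ n, c n = s(φ (stp w n).1, φ (stp w n).2) ∧
      p n = s(φ (match w n with | true => (stp w n).1 | false => (stp w n).2), φ (n + 2)) := by
  have key : ∀ n (x : V × V), c n = s(x.1, x.2) → ∃ (b : Bool) (z : V),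
      c (n + 1) = s((match b with | true => (z, x.2) | false => (x.1, z)).1,
        (match b with | true => (z, x.2) | false => (x.1, z)).2) ∧
      p n = s((match b with | true => x.1 | false => x.2), z) := by
    rintro n ⟨a, b⟩ h
    obtain ⟨u, v, w, h1, h2, h3⟩ := hstep n
    rw [h1, Sym2.eq_iff] at h
    rcases h with ⟨rfl, rfl⟩ | ⟨rfl, rfl⟩
    · exact ⟨true, w, by rw [h2]; exact Sym2.eq_swap, h3⟩
    · exact ⟨false, w, h2, h3⟩
  choose B Z hC hP using key
  obtain ⟨u, v, _, h0, _⟩ := hstep 0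
  let X : ∀ n, {x : V × V // c n = s(x.1, x.2)} := fun n =>
    Nat.rec ⟨(u, v), h0⟩ (fun n x => ⟨_, hC n x.1 x.2⟩) n
  let w : ℕ → Bool := fun n => B n (X n).1 (X n).2
  let φ : ℕ → V := fun n => match n with
    | 0 => u
    | 1 => v
    | n + 2 => Z n (X n).1 (X n).2
  have hX : ∀ n, (X n).1 = (φ (stp w n).1, φ (stp w n).2) := by
    intro n
    induction n with
    | zero => rfl
    | succ n ih =>
      have e1 : (X (n + 1)).1 = (match w n with
        | true => (φ (n + 2), (X n).1.2) | false => ((X n).1.1, φ (n + 2))) := rfl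
      rw [e1, ih, stp]
      cases w n <;> rfl
  refine ⟨w, φ, fun n => ⟨?_, ?_⟩⟩
  · rw [(X n).2, hX]
  · have := hP n (X n).1 (X n).2
    rw [this]
    change s((match w n with | true => (X n).1.1 | false => (X n).1.2), φ (n + 2)) = _
    rw [hX]
    cases w n <;> rfl

theorem stp_congr (w w' : ℕ → Bool) : ∀ n, (∀ i < n, w i = w' i) → stp w n = stp w' n := by
  intro n
  induction n with
  | zero => intro _; rfl
  | succ n ih =>
    intro h
    rw [stp, stp, ih (fun i hi => h i (by omega)), h n (by omega)]

theorem core {V : Type} (c p : ℕ → Sym2 V) (hper : c 7 = c 0)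
    (hstep : ∀ n, ∃ u v w, c n = s(u, v) ∧ c (n + 1) = s(v, w) ∧ p n = s(u, w))
    (hdist : ∀ i < 14, ∀ j < i, lbl c p i ≠ lbl c p j)
    (htri : ∀ i < 14, ∀ j < i, ∀ k < 14, nadj i j = true → ∀ u v w, lbl c p i = s(u, v) →
      lbl c p j = s(v, w) → lbl c p k = s(u, w) → False) :
    (∃ (h : V) (ψ : ℕ → V), ψ 7 = ψ 0 ∧ ∀ n < 7, c n = s(h, ψ n) ∧ p n = s(ψ n, ψ (n + 1))) ∨
    (∃ (ψ : ℕ → V), ψ 7 = ψ 0 ∧ ψ 8 = ψ 1 ∧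
      ∀ n < 7, c n = s(ψ n, ψ (n + 1)) ∧ p n = s(ψ n, ψ (n + 2))) := by
  obtain ⟨w₀, φ, h0⟩ := strip c p hstep
  obtain ⟨w, hw⟩ : ∃ w, w = wd (w₀ 0) (w₀ 1) (w₀ 2) (w₀ 3) (w₀ 4) (w₀ 5) (w₀ 6) := ⟨_, rfl⟩
  have hww : ∀ i < 7, w₀ i = w i := by
    intro i hi
    rw [hw]
    interval_cases i <;> rfl
  have hst : ∀ n ≤ 7, stp w₀ n = stp w n := fun n hn =>
    stp_congr _ _ n (fun i hi => hww i (by omega))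
  have hc : ∀ n ≤ 7, c n = s(φ (stp w n).1, φ (stp w n).2) := fun n hn => by
    rw [← hst n hn]; exact (h0 n).1
  have hp : ∀ n < 7, p n = s(φ (match w n with | true => (stp w n).1 | false => (stp w n).2),
      φ (n + 2)) := fun n hn => by
    rw [← hst n (by omega), ← hww n hn]; exact (h0 n).2
  have hl : ∀ x < 14, lbl c p x = s(φ (lab w x).1, φ (lab w x).2) := by
    intro x hx
    unfold lbl lab
    split_ifs with h
    · exact hc x (by omega)
    · rw [hp (x - 7) (by omega), show x - 7 + 2 = x - 5 by omega]
      cases w (x - 7) <;> rfl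
  have hend : ∃ s : Bool, φ (stp w 7).1 = φ (if s then 1 else 0) ∧
      φ (stp w 7).2 = φ (if s then 0 else 1) := by
    have := hper
    rw [hc 7 le_rfl, hc 0 (by omega), Sym2.eq_iff] at this
    rcases this with h | h
    · exact ⟨false, h⟩
    · exact ⟨true, h⟩
  obtain ⟨s, hs1, hs2⟩ := hend
  have hren : ∀ l, φ (ren (stp w 7).1 (stp w 7).2 s l) = φ l := by
    intro l
    unfold ren
    by_cases h1 : l = (stp w 7).1
    · rw [if_pos h1, ← hs1, h1]
    · rw [if_neg h1]
      by_cases h2 : l = (stp w 7).2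
      · rw [if_pos h2, ← hs2, h2]
      · rw [if_neg h2]
  have hb := bad_all (w₀ 0) (w₀ 1) (w₀ 2) (w₀ 3) (w₀ 4) (w₀ 5) (w₀ 6) s
  rw [← hw, Bool.or_eq_true] at hb
  rcases hb with hb | hb
  swap
  · exact (bad_false c p (rlab w s) φ (fun x hx => by simp only [rlab, hren]; exact hl x hx)
      hdist htri hb).elim
  simp only [good, Bool.or_eq_true, beq_iff_eq, List.cons.injEq, and_true] at hb
  rcases hb with ((⟨e0, e1, e2, e3, e4, e5, e6, rfl⟩ | ⟨e0, e1, e2, e3, e4, e5, e6, rfl⟩) |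
    ⟨e0, e1, e2, e3, e4, e5, e6, rfl⟩) | ⟨e0, e1, e2, e3, e4, e5, e6, rfl⟩ <;>
    rw [e0, e1, e2, e3, e4, e5, e6] at hw <;> subst hw
  · left
    refine ⟨φ 1, fun n => match n with | 0 => φ 0 | n + 1 => φ (n + 2), hs1, fun n hn => ?_⟩
    have h1 := hc n hn.le
    have h2 := hp n hn
    rw [h1, h2]
    interval_cases n <;> exact ⟨Sym2.eq_swap, rfl⟩
  · left
    refine ⟨φ 0, fun n => φ (n + 1), hs2, fun n hn => ?_⟩
    have h1 := hc n hn.le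
    have h2 := hp n hn
    rw [h1, h2]
    interval_cases n <;> exact ⟨rfl, rfl⟩
  · right
    refine ⟨φ, hs2, hs1, fun n hn => ?_⟩
    have h1 := hc n hn.le
    have h2 := hp n hn
    rw [h1, h2]
    interval_cases n <;> first | exact ⟨rfl, rfl⟩ | exact ⟨Sym2.eq_swap, rfl⟩
  · right
    refine ⟨fun n => match n with | 0 => φ 1 | 1 => φ 0 | n + 2 => φ (n + 2), hs1, hs2,
      fun n hn => ?_⟩
    have h1 := hc n hn.le
    have h2 := hp n hn
    rw [h1, h2]
    interval_cases n <;> first | exact ⟨rfl, rfl⟩ | exact ⟨Sym2.eq_swap, rfl⟩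

/-! Graph-theoretic side -/

instance : DecidableRel (sunGraph 7).Adj := fun a b =>
  inferInstanceAs (Decidable (a ≠ b ∧ ((∃ i : ZMod 7,
    (a = Sum.inl i ∧ b = Sum.inl (i + 1)) ∨
    (a = Sum.inr i ∧ b = Sum.inl i) ∨
    (a = Sum.inr i ∧ b = Sum.inl (i + 1))) ∨ (∃ i : ZMod 7,
    (b = Sum.inl i ∧ a = Sum.inl (i + 1)) ∨
    (b = Sum.inr i ∧ a = Sum.inl i) ∨
    (b = Sum.inr i ∧ a = Sum.inl (i + 1))))))

def nf (a : Bool × SunV) : Bool × SunV :=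
  if a = (true, Sum.inl 1) then (false, Sum.inl 1) else
  if a = (true, Sum.inr 0) then (false, Sum.inl 0) else
  if a = (true, Sum.inl 0) then (false, Sum.inr 0) else
  if a = (true, Sum.inr 1) then (false, Sum.inl 2) else
  if a = (true, Sum.inl 2) then (false, Sum.inr 1) else a

abbrev qq (a : Bool × SunV) : Quotient (Relation.EqvGen.setoid equalRel) := Quotient.mk _ a

theorem nf_rel {a b : Bool × SunV} (h : equalRel a b) : nf a = nf b := by
  rcases h with ⟨rfl, rfl⟩ | ⟨rfl, rfl⟩ | ⟨rfl, rfl⟩ | ⟨rfl, rfl⟩ | ⟨rfl, rfl⟩ <;> decide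

theorem nf_eq {a b : Bool × SunV} (h : qq a = qq b) : nf a = nf b := by
  have h' : Relation.EqvGen equalRel a b := Quotient.exact h
  clear h
  induction h' with
  | rel _ _ h => exact nf_rel h
  | refl _ => rfl
  | symm _ _ h1 ih => exact ih.symm
  | trans _ _ _ h1 h2 ih1 ih2 => exact ih1.trans ih2

instance : DecidableRel equalRel := fun x y => by unfold equalRel; infer_instance

theorem nf_or : ∀ a, nf a = a ∨ equalRel (nf a) a := by decide +kernel

theorem qq_nf (a : Bool × SunV) : qq (nf a) = qq a := by
  rcases nf_or a with h | h
  · rw [h]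
  · exact Quotient.sound (Relation.EqvGen.rel _ _ h)

theorem qq_of_nf {a b : Bool × SunV} (h : nf a = nf b) : qq a = qq b := by
  rw [← qq_nf a, ← qq_nf b, h]

def hb (a b : Bool × SunV) : Prop :=
  ∃ d x, nf (d, x) = nf a ∧ ∃ y, nf (d, y) = nf b ∧ (sunGraph 7).Adj x y

instance : DecidableRel hb := fun x y => by unfold hb; infer_instance

theorem hb_of_adj {a b : Bool × SunV} (h : equalGadget.Adj (qq a) (qq b)) : hb a b := by
  obtain ⟨-, ⟨a', b', h, h1, h2⟩ | ⟨b', a', h, h2, h1⟩⟩ := h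
  all_goals
    have h1 := nf_eq h1
    have h2 := nf_eq h2
    obtain ⟨d, x⟩ := a'
    obtain ⟨d', y⟩ := b'
    obtain ⟨-, ⟨h3, h4⟩ | ⟨h3, h4⟩⟩ := h
    all_goals
      simp only at h3 h4
      subst h3
      first
      | exact ⟨_, x, h1.symm, y, h2.symm, h4⟩
      | exact ⟨_, x, h1.symm, y, h2.symm, h4.symm⟩

theorem nf_inj : ∀ c x y, nf (c, x) = nf (c, y) → x = y := by decide +kernel

theorem hb_sun : ∀ c x y, hb (c, x) (c, y) → (sunGraph 7).Adj x y := by decide +kernel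

theorem hb_common : ∀ (c : Bool) (i : ZMod 7) a, hb a (c, Sum.inl i) → hb a (c, Sum.inl (i + 1)) →
    nf a = nf (c, Sum.inr i) := by decide +kernel

theorem adj_of_sun {c : Bool} {x y : SunV} (h : (sunGraph 7).Adj x y) :
    equalGadget.Adj (qq (c, x)) (qq (c, y)) := by
  refine ⟨fun h' => h.ne (nf_inj c x y (nf_eq h')), Or.inl ⟨(c, x), (c, y), ?_, rfl, rfl⟩⟩
  refine ⟨fun h' => h.ne (congrArg Prod.snd h'), Or.inl ⟨rfl, h⟩⟩

theorem sun_step : ∀ i : ZMod 7, (sunGraph 7).Adj (Sum.inl i) (Sum.inl (i + 1)) := by decide +kernel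

/-- edge of `G` corresponding to a sun vertex -/
def EE {V : Type} (G : SimpleGraph V) (f : TriLine G ≃g equalGadget) (c : Bool) (x : SunV) :
    G.edgeSet := f.symm (qq (c, x))

theorem EE_inj {V : Type} (G : SimpleGraph V) (f : TriLine G ≃g equalGadget) (c : Bool)
    (x y : SunV) (h : (EE G f c x : Sym2 V) = EE G f c y) : x = y :=
  nf_inj c x y (nf_eq (f.symm.injective (Subtype.ext h)))

theorem EE_step {V : Type} (G : SimpleGraph V) (f : TriLine G ≃g equalGadget) (c : Bool)
    (i : ZMod 7) : ∃ u v w, (EE G f c (Sum.inl i) : Sym2 V) = s(u, v) ∧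
      (EE G f c (Sum.inl (i + 1)) : Sym2 V) = s(v, w) ∧
      (EE G f c (Sum.inr i) : Sym2 V) = s(u, w) := by
  have h : (TriLine G).Adj (EE G f c (Sum.inl i)) (EE G f c (Sum.inl (i + 1))) :=
    f.symm.map_adj_iff.2 (adj_of_sun (sun_step i))
  obtain ⟨u, v, w, huv, hvw, huw, h1, h2⟩ := h
  refine ⟨u, v, w, h1, h2, ?_⟩
  let e : G.edgeSet := ⟨s(u, w), huw⟩
  have a1 : (TriLine G).Adj e (EE G f c (Sum.inl i)) :=
    ⟨w, u, v, huw.symm, huv, hvw.symm, Sym2.eq_swap, h1⟩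
  have a2 : (TriLine G).Adj e (EE G f c (Sum.inl (i + 1))) :=
    ⟨u, w, v, huw, hvw.symm, huv, rfl, h2.trans Sym2.eq_swap⟩
  obtain ⟨a, ha⟩ := Quotient.exists_rep (f e)
  have b1 := f.map_adj_iff.2 a1
  have b2 := f.map_adj_iff.2 a2
  simp only [EE, RelIso.apply_symm_apply] at b1 b2
  rw [← ha] at b1 b2
  have := qq_of_nf (hb_common c i a (hb_of_adj b1) (hb_of_adj b2))
  rw [EE, ← this, qq, ha, RelIso.symm_apply_apply]

theorem EE_tri {V : Type} (G : SimpleGraph V) (f : TriLine G ≃g equalGadget) (c : Bool)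
    (x y z : SunV) (u v w : V) (h1 : (EE G f c x : Sym2 V) = s(u, v))
    (h2 : (EE G f c y : Sym2 V) = s(v, w)) (h3 : (EE G f c z : Sym2 V) = s(u, w)) :
    (sunGraph 7).Adj x y := by
  have k1 : G.Adj u v := by have := (EE G f c x).2; rw [h1] at this; exact this
  have k2 : G.Adj v w := by have := (EE G f c y).2; rw [h2] at this; exact this
  have k3 : G.Adj u w := by have := (EE G f c z).2; rw [h3] at this; exact this
  have h : (TriLine G).Adj (EE G f c x) (EE G f c y) := ⟨u, v, w, k1, k2, k3, h1, h2⟩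
  have b := f.map_adj_iff.2 h
  simp only [EE, RelIso.apply_symm_apply] at b
  exact hb_sun c x y (hb_of_adj b)

def wlab : SunV → Sym2 (Option (ZMod 7))
  | Sum.inl i => s(none, some i)
  | Sum.inr i => s(some i, some (i + 1))

def slab : SunV → Sym2 (ZMod 7)
  | Sum.inl i => s(i, i + 1)
  | Sum.inr i => s(i, i + 2)

def IsLab {V α : Type} (G : SimpleGraph V) (f : TriLine G ≃g equalGadget) (c : Bool)
    (l : SunV → Sym2 α) (φ : α → V) : Prop := ∀ x, (EE G f c x : Sym2 V) = (l x).map φ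

/-- the sun vertex number `x` -/
def vx (x : ℕ) : SunV := lbl (fun n => Sum.inl (n : ZMod 7)) (fun n => Sum.inr (n : ZMod 7)) x

theorem vx_inj : ∀ i < 14, ∀ j < i, vx i ≠ vx j := by decide +kernel

theorem vx_nadj : ∀ i < 14, ∀ j < i, nadj i j = true → ¬ (sunGraph 7).Adj (vx i) (vx j) := by
  decide +kernel

theorem classify {V : Type} (G : SimpleGraph V) (f : TriLine G ≃g equalGadget) (c : Bool) :
    (∃ φ, IsLab G f c wlab φ) ∨ (∃ φ, IsLab G f c slab φ) := by
  have hl : ∀ x, lbl (fun n => (EE G f c (Sum.inl (n : ZMod 7)) : Sym2 V))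
      (fun n => (EE G f c (Sum.inr (n : ZMod 7)) : Sym2 V)) x = EE G f c (vx x) := by
    intro x
    unfold vx lbl
    split_ifs <;> rfl
  have := core (fun n => (EE G f c (Sum.inl (n : ZMod 7)) : Sym2 V))
    (fun n => (EE G f c (Sum.inr (n : ZMod 7)) : Sym2 V)) rfl
    (fun n => by
      have := EE_step G f c n
      simpa only [Nat.cast_add, Nat.cast_one] using this)
    (fun i hi j hj h => by
      rw [hl, hl] at h
      exact vx_inj i hi j hj (EE_inj G f c _ _ h))
    (fun i hi j hj k hk hn u v w h1 h2 h3 => by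
      rw [hl] at h1 h2 h3
      exact vx_nadj i hi j hj hn (EE_tri G f c _ _ _ u v w h1 h2 h3))
  rcases this with ⟨h, ψ, h7, H⟩ | ⟨ψ, h7, h8, H⟩
  · left
    refine ⟨fun o => match o with | none => h | some (i : Fin 7) => ψ i.val, fun x => ?_⟩
    rcases x with x | x
    · have := (H (Fin.val (n := 7) x) x.isLt).1
      change Fin 7 at x
      fin_cases x <;> exact this
    · have := (H (Fin.val (n := 7) x) x.isLt).2
      change Fin 7 at x
      fin_cases x
      on_goal 7 => exact this.trans (congrArg (fun t => s(ψ 6, t)) h7)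
      all_goals exact this
  · right
    refine ⟨fun (i : Fin 7) => ψ i.val, fun x => ?_⟩
    rcases x with x | x
    · have := (H (Fin.val (n := 7) x) x.isLt).1
      change Fin 7 at x
      fin_cases x
      on_goal 7 => exact this.trans (congrArg (fun t => s(ψ 6, t)) h7)
      all_goals exact this
    · have := (H (Fin.val (n := 7) x) x.isLt).2
      change Fin 7 at x
      fin_cases x
      on_goal 6 => exact this.trans (congrArg (fun t => s(ψ 5, t)) h7)
      on_goal 6 => exact this.trans (congrArg (fun t => s(ψ 6, t)) h8)
      all_goals exact this

theorem lab_inj {V α : Type} (G : SimpleGraph V) (f : TriLine G ≃g equalGadget) (c : Bool)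
    (l : SunV → Sym2 α) (φ : α → V) (H : IsLab G f c l φ)
    (hd : ∀ a b, a ≠ b → (∃ s, l s = s(a, b)) ∨
      ∃ s t, s ≠ t ∧ ∃ x, l s = s(a, x) ∧ l t = s(b, x)) : Function.Injective φ := by
  intro a b hab
  by_contra hne
  rcases hd a b hne with ⟨s, hs⟩ | ⟨s, t, hst, x, h1, h2⟩
  · have h := H s
    have h2 := (EE G f c s).2
    rw [h, hs, Sym2.map_mk] at h2
    exact (G.ne_of_adj h2) hab
  · apply hst
    apply EE_inj G f c
    rw [H, H, h1, h2, Sym2.map_mk, Sym2.map_mk, hab]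

theorem lab_iso {V α : Type} (G : SimpleGraph V) (f : TriLine G ≃g equalGadget) (c : Bool)
    (l : SunV → Sym2 α) (φ : α → V) (H : IsLab G f c l φ) (hφ : Function.Injective φ)
    (A : SimpleGraph α) (hA : ∀ a b, A.Adj a b ↔ ∃ s, l s = s(a, b)) (hc : ∀ a, ∃ b, A.Adj a b) :
    Nonempty ((edgePre G f (equalSunVerts c)).coe ≃g A) := by
  have hE : ∀ e : G.edgeSet, f e ∈ equalSunVerts c ↔ ∃ x, e = EE G f c x := by
    intro e
    constructor
    · rintro ⟨x, hx⟩
      exact ⟨x, by rw [EE]; exact (f.symm_apply_apply e).symm.trans (congrArg f.symm hx.symm)⟩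
    · rintro ⟨x, rfl⟩
      exact ⟨x, by simp [EE]⟩
  have hadj : ∀ u v, (edgePre G f (equalSunVerts c)).Adj u v ↔
      ∃ x, (EE G f c x : Sym2 V) = s(u, v) := by
    intro u v
    constructor
    · rintro ⟨_, e, he, h⟩
      obtain ⟨x, rfl⟩ := (hE e).1 h
      exact ⟨x, he⟩
    · rintro ⟨x, hx⟩
      refine ⟨?_, EE G f c x, hx, (hE _).2 ⟨x, rfl⟩⟩
      have := (EE G f c x).2
      rw [hx] at this
      exact this
  have hφadj : ∀ a b, (edgePre G f (equalSunVerts c)).Adj (φ a) (φ b) ↔ A.Adj a b := by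
    intro a b
    rw [hadj, hA]
    refine exists_congr fun x => ?_
    rw [H x, ← Sym2.map_mk]
    exact (Sym2.map.injective hφ).eq_iff
  have hv : ∀ a, φ a ∈ (edgePre G f (equalSunVerts c)).verts := fun a => by
    obtain ⟨b, hb⟩ := hc a
    exact ((hφadj a b).2 hb).fst_mem
  have hs : ∀ v ∈ (edgePre G f (equalSunVerts c)).verts, ∃ a, φ a = v := by
    rintro v ⟨u, e, he, h⟩
    obtain ⟨x, rfl⟩ := (hE e).1 h
    have hm : v ∈ (EE G f c x : Sym2 V) := by rw [he]; exact Sym2.mem_mk_left _ _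
    rw [H x, Sym2.mem_map] at hm
    obtain ⟨a, _, ha⟩ := hm
    exact ⟨a, ha⟩
  let g : α → (edgePre G f (equalSunVerts c)).verts := fun a => ⟨φ a, hv a⟩
  have hg : Function.Bijective g := by
    constructor
    · intro a b h
      exact hφ (congrArg Subtype.val h)
    · rintro ⟨v, h⟩
      obtain ⟨a, rfl⟩ := hs v h
      exact ⟨a, rfl⟩
  refine ⟨RelIso.symm ⟨Equiv.ofBijective g hg, ?_⟩⟩
  intro a b
  exact hφadj a b

instance : DecidableRel (wheelGraph 7).Adj := fun a b =>
  inferInstanceAs (Decidable (a ≠ b ∧ (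
    ((∃ i : ZMod 7, a = some i ∧ b = some (i + 1)) ∨ (a = none ∧ b ≠ none)) ∨
    ((∃ i : ZMod 7, b = some i ∧ a = some (i + 1)) ∨ (b = none ∧ a ≠ none)))))

instance : DecidableRel (squaredCycleGraph 7).Adj := fun a b =>
  inferInstanceAs (Decidable (a ≠ b ∧ ((b = a + 1 ∨ b = a + 2) ∨ (a = b + 1 ∨ a = b + 2))))

theorem wheel_iso {V : Type} (G : SimpleGraph V) (f : TriLine G ≃g equalGadget) (c : Bool)
    (φ : Option (ZMod 7) → V) (H : IsLab G f c wlab φ) :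
    Nonempty ((edgePre G f (equalSunVerts c)).coe ≃g wheelGraph 7) :=
  lab_iso G f c wlab φ H (lab_inj G f c wlab φ H (by decide +kernel)) _ (by decide +kernel)
    (by decide +kernel)

theorem square_inj {V : Type} (G : SimpleGraph V) (f : TriLine G ≃g equalGadget) (c : Bool)
    (φ : ZMod 7 → V) (H : IsLab G f c slab φ) : Function.Injective φ :=
  lab_inj G f c slab φ H (by decide +kernel)

theorem square_iso {V : Type} (G : SimpleGraph V) (f : TriLine G ≃g equalGadget) (c : Bool)
    (φ : ZMod 7 → V) (H : IsLab G f c slab φ) :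
    Nonempty ((edgePre G f (equalSunVerts c)).coe ≃g squaredCycleGraph 7) :=
  lab_iso G f c slab φ H (square_inj G f c φ H) _ (by decide +kernel) (by decide +kernel)

theorem EE_swap {V : Type} (G : SimpleGraph V) (f : TriLine G ≃g equalGadget) (c : Bool) :
    EE G f c (Sum.inr 0) = EE G f (!c) (Sum.inl 0) ∧
    EE G f c (Sum.inr 1) = EE G f (!c) (Sum.inl 2) := by
  constructor <;> refine congrArg f.symm (qq_of_nf ?_) <;> cases c <;> decide

theorem no_mix {V : Type} (G : SimpleGraph V) (f : TriLine G ≃g equalGadget) (c : Bool)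
    (φ : Option (ZMod 7) → V) (H : IsLab G f c wlab φ)
    (ψ : ZMod 7 → V) (H' : IsLab G f (!c) slab ψ) : False := by
  obtain ⟨h1, h2⟩ := EE_swap G f c
  have hi := square_inj G f _ ψ H'
  have a1 := (H (Sum.inr 0)).symm.trans ((congrArg Subtype.val h1).trans (H' (Sum.inl 0)))
  have a2 := (H (Sum.inr 1)).symm.trans ((congrArg Subtype.val h2).trans (H' (Sum.inl 2)))
  have m1 : φ (some 1) ∈ (slab (Sum.inl 0)).map ψ := by
    rw [← a1]; exact Sym2.mem_mk_right _ _
  have m2 : φ (some 1) ∈ (slab (Sum.inl 2)).map ψ := by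
    rw [← a2]; exact Sym2.mem_mk_left _ _
  rw [Sym2.mem_map] at m1 m2
  obtain ⟨a, ha, ha'⟩ := m1
  obtain ⟨b, hb, hb'⟩ := m2
  have := hi (ha'.trans hb'.symm)
  subst this
  have key : ∀ a : ZMod 7, a = 0 ∨ a = 0 + 1 → a = 2 ∨ a = 2 + 1 → False := by decide
  simp only [slab, Sym2.mem_iff] at ha hb
  exact key a ha hb

/-- If two 7-suns `S`, `S'` are joined by an EQUAL gadget and the resulting graph has a
triangular line graph preimage `G`, then `T⁻¹(S)` and `T⁻¹(S')` are isomorphic: either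
both are 7-wheels, or both are squared 7-cycles. -/
theorem equalGadget_preimages {V : Type} [Fintype V] (G : SimpleGraph V)
    (f : TriLine G ≃g equalGadget) :
    (Nonempty ((edgePre G f (equalSunVerts false)).coe ≃g wheelGraph 7) ∧
      Nonempty ((edgePre G f (equalSunVerts true)).coe ≃g wheelGraph 7)) ∨
    (Nonempty ((edgePre G f (equalSunVerts false)).coe ≃g squaredCycleGraph 7) ∧
      Nonempty ((edgePre G f (equalSunVerts true)).coe ≃g squaredCycleGraph 7)) := by
  rcases classify G f false with ⟨φ, h⟩ | ⟨φ, h⟩ <;> rcases classify G f true with ⟨ψ, h'⟩ | ⟨ψ, h'⟩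
  · exact Or.inl ⟨wheel_iso G f _ φ h, wheel_iso G f _ ψ h'⟩
  · exact (no_mix G f false φ h ψ h').elim
  · exact (no_mix G f true ψ h' φ h).elim
  · exact Or.inr ⟨square_iso G f _ φ h, square_iso G f _ ψ h'⟩
end

section
/- For each w ∈ {0, 1, 2}, the clause gadget built from three 12-suns G₁, G₂, G₃ admits a preimage in which exactly w of the three subgraphs T⁻¹(G₁), T⁻¹(G₂), T⁻¹(G₃) are isomorphic to the 12-wheel W₁₂ and the remaining ones are isomorphic to the squared 12-cycle C₁₂². -/
open SimpleGraph

/-- Vertex type of a 12-sun: `Sum.inl i` are the cycle vertices `vᵢ`, and `Sum.inr i`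
is the degree-two vertex `pᵢ` attached to the cycle edge `{vᵢ, vᵢ₊₁}`. -/
abbrev Sun12V : Type := ZMod 12 ⊕ ZMod 12

/-- Three disjoint copies `G₁, G₂, G₃` of the 12-sun, indexed by `ZMod 3`. -/
def clauseBase : SimpleGraph (ZMod 3 × Sun12V) :=
  SimpleGraph.fromRel (fun a b => a.1 = b.1 ∧ (sunGraph 12).Adj a.2 b.2)

/-- The clause-gadget identifications: in each 12-sun take the two triangles
`⟨a₁, a₂, a₃⟩ = ⟨v₀, v₁, p₀⟩` and `⟨b₁, b₂, b₃⟩ = ⟨v₆, v₇, p₆⟩` at maximum distance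
(five triangles apart; `a₃ = p₀` and `b₃ = p₆` have degree 2, and `a₁, a₂, b₁, b₂` lie on
the 12-cycle in this cyclic order), and identify `a_{ℓ,1} = b_{ℓ+1,1}`,
`a_{ℓ,2} = b_{ℓ+1,3}`, `a_{ℓ,3} = b_{ℓ+1,2}` with subscripts mod 3. -/
def clauseRel : (ZMod 3 × Sun12V) → (ZMod 3 × Sun12V) → Prop := fun x y =>
  ∃ l : ZMod 3,
    (x = (l, Sum.inl 0) ∧ y = (l + 1, Sum.inl 6)) ∨
    (x = (l, Sum.inl 1) ∧ y = (l + 1, Sum.inr 6)) ∨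
    (x = (l, Sum.inr 0) ∧ y = (l + 1, Sum.inl 7))

/-- The clause gadget: three 12-suns twisted together. -/
def clauseGadget : SimpleGraph (Quotient (Relation.EqvGen.setoid clauseRel)) :=
  Glue clauseBase clauseRel

/-- The vertices of the clause gadget coming from the `l`-th 12-sun `G_l`. -/
def clauseSunVerts (l : ZMod 3) : Set (Quotient (Relation.EqvGen.setoid clauseRel)) :=
  Set.range (fun v : Sun12V => Quotient.mk _ (l, v))

namespace ClauseAux

abbrev X : Type := ZMod 3 × Sun12V

/-- Endpoints of the edge of the preimage that corresponds to a sun vertex. -/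
def ends {V : Type} (c : ZMod 3 → Bool) (ctr : ZMod 3 → V) (φ : ZMod 3 → ZMod 12 → V) :
    X → V × V
  | (l, Sum.inl i) => bif c l then (ctr l, φ l i) else (φ l i, φ l (i + 1))
  | (l, Sum.inr i) => bif c l then (φ l i, φ l (i + 1)) else (φ l i, φ l (i + 2))

/-- Oriented base adjacency. -/
def sameEdge {V : Type} (a b : V × V) : Prop :=
  (a.1 = b.1 ∧ a.2 = b.2) ∨ (a.1 = b.2 ∧ a.2 = b.1)

instance {V : Type} [DecidableEq V] (a b : V × V) : Decidable (sameEdge a b) := by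
  unfold sameEdge; infer_instance

lemma sameEdge_iff {V : Type} (a b : V × V) : sameEdge a b ↔ s(a.1, a.2) = s(b.1, b.2) := by
  rw [Sym2.eq_iff]; rfl

/-- Two edges share a vertex and their other ends are adjacent. -/
def tri {V : Type} (adj : V → V → Bool) (a b : V × V) : Prop :=
  (a.2 = b.1 ∧ adj a.1 b.2) ∨ (a.2 = b.2 ∧ adj a.1 b.1) ∨
  (a.1 = b.1 ∧ adj a.2 b.2) ∨ (a.1 = b.2 ∧ adj a.2 b.1)

instance {V : Type} [DecidableEq V] (adj : V → V → Bool) (a b : V × V) :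
    Decidable (tri adj a b) := by
  unfold tri; infer_instance

lemma sun_adj (a b : Sun12V) (h : (sunGraph 12).Adj a b) : ∃ i : ZMod 12,
    ((a = Sum.inl i ∧ b = Sum.inl (i + 1)) ∨ (a = Sum.inr i ∧ b = Sum.inl i) ∨
      (a = Sum.inr i ∧ b = Sum.inl (i + 1))) ∨
    ((b = Sum.inl i ∧ a = Sum.inl (i + 1)) ∨ (b = Sum.inr i ∧ a = Sum.inl i) ∨
      (b = Sum.inr i ∧ a = Sum.inl (i + 1))) := by
  simp only [sunGraph, SimpleGraph.fromRel_adj] at h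
  obtain ⟨-, ⟨i, h⟩ | ⟨i, h⟩⟩ := h
  · exact ⟨i, Or.inl h⟩
  · exact ⟨i, Or.inr h⟩

lemma ne_succ12 : ∀ i : ZMod 12, i ≠ i + 1 := by decide

lemma sun1 (i : ZMod 12) : (sunGraph 12).Adj (Sum.inl i) (Sum.inl (i + 1)) := by
  simp only [sunGraph, SimpleGraph.fromRel_adj]
  exact ⟨fun h => ne_succ12 i (Sum.inl.inj h), Or.inl ⟨i, Or.inl ⟨rfl, rfl⟩⟩⟩
lemma sun2 (i : ZMod 12) : (sunGraph 12).Adj (Sum.inr i) (Sum.inl i) := by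
  simp only [sunGraph, SimpleGraph.fromRel_adj]
  exact ⟨fun h => by simp at h, Or.inl ⟨i, Or.inr (Or.inl ⟨rfl, rfl⟩)⟩⟩
lemma sun3 (i : ZMod 12) : (sunGraph 12).Adj (Sum.inr i) (Sum.inl (i + 1)) := by
  simp only [sunGraph, SimpleGraph.fromRel_adj]
  exact ⟨fun h => by simp at h, Or.inl ⟨i, Or.inr (Or.inr ⟨rfl, rfl⟩)⟩⟩

lemma base_adj {l : ZMod 3} {a b : Sun12V} (h : (sunGraph 12).Adj a b) :
    clauseBase.Adj (l, a) (l, b) := by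
  simp only [clauseBase, SimpleGraph.fromRel_adj]
  exact ⟨fun e => h.ne (Prod.mk.inj e).2, Or.inl ⟨trivial, h⟩⟩

lemma base_elim {a b : X} (h : clauseBase.Adj a b) : ∃ l x y, a = (l, x) ∧ b = (l, y) ∧
    (sunGraph 12).Adj x y := by
  simp only [clauseBase, SimpleGraph.fromRel_adj] at h
  obtain ⟨l, x⟩ := a
  obtain ⟨m, y⟩ := b
  obtain ⟨-, ⟨h, h'⟩ | ⟨h, h'⟩⟩ := h
  · simp only at h; subst h; exact ⟨_, x, y, rfl, rfl, h'⟩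
  · simp only at h; subst h; exact ⟨_, x, y, rfl, rfl, h'.symm⟩

/-- All the finite checks. -/
structure Good {V : Type} (c : ZMod 3 → Bool) (ctr : ZMod 3 → V) (φ : ZMod 3 → ZMod 12 → V)
    (adj : V → V → Bool) : Prop where
  symm : ∀ u v, adj u v = true → adj v u = true
  irr : ∀ u, adj u u = false
  mem : ∀ x, adj (ends c ctr φ x).1 (ends c ctr φ x).2 = true
  surj : ∀ u v, adj u v = true → ∃ x, sameEdge (ends c ctr φ x) (u, v)
  rel0 : ∀ l, sameEdge (ends c ctr φ (l, Sum.inl 0)) (ends c ctr φ (l + 1, Sum.inl 6))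
  rel1 : ∀ l, sameEdge (ends c ctr φ (l, Sum.inl 1)) (ends c ctr φ (l + 1, Sum.inr 6))
  rel2 : ∀ l, sameEdge (ends c ctr φ (l, Sum.inr 0)) (ends c ctr φ (l + 1, Sum.inl 7))
  inj : ∀ x y, sameEdge (ends c ctr φ x) (ends c ctr φ y) → x = y ∨ clauseRel x y ∨ clauseRel y x
  tri1 : ∀ l i, tri adj (ends c ctr φ (l, Sum.inl i)) (ends c ctr φ (l, Sum.inl (i + 1)))
  tri2 : ∀ l i, tri adj (ends c ctr φ (l, Sum.inr i)) (ends c ctr φ (l, Sum.inl i))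
  tri3 : ∀ l i, tri adj (ends c ctr φ (l, Sum.inr i)) (ends c ctr φ (l, Sum.inl (i + 1)))
  only : ∀ u v, adj u v = true → ∀ w, adj v w = true → adj u w = true → ∃ l i,
    (sameEdge (ends c ctr φ (l, Sum.inl i)) (u, v) ∧
      (sameEdge (ends c ctr φ (l, Sum.inl (i + 1))) (v, w) ∨
        sameEdge (ends c ctr φ (l, Sum.inr i)) (v, w))) ∨
    (sameEdge (ends c ctr φ (l, Sum.inl (i + 1))) (u, v) ∧
      (sameEdge (ends c ctr φ (l, Sum.inl i)) (v, w) ∨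
        sameEdge (ends c ctr φ (l, Sum.inr i)) (v, w))) ∨
    (sameEdge (ends c ctr φ (l, Sum.inr i)) (u, v) ∧
      (sameEdge (ends c ctr φ (l, Sum.inl i)) (v, w) ∨
        sameEdge (ends c ctr φ (l, Sum.inl (i + 1))) (v, w)))
  injφ : ∀ l i j, φ l i = φ l j → i = j
  ctrφ : ∀ l i, c l = true → φ l i ≠ ctr l

section
variable {V : Type} {c : ZMod 3 → Bool} {ctr : ZMod 3 → V} {φ : ZMod 3 → ZMod 12 → V}
  {adj : V → V → Bool}

/-- The preimage graph. -/
def gr (g : Good c ctr φ adj) : SimpleGraph V where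
  Adj u v := adj u v = true
  symm := ⟨fun u v h => g.symm u v h⟩
  loopless := ⟨fun u h => by rw [g.irr] at h; cases h⟩

/-- The edge as an unordered pair. -/
def E (c : ZMod 3 → Bool) (ctr : ZMod 3 → V) (φ : ZMod 3 → ZMod 12 → V) (x : X) : Sym2 V :=
  s((ends c ctr φ x).1, (ends c ctr φ x).2)

lemma E_mk {x : X} {u v : V} : sameEdge (ends c ctr φ x) (u, v) ↔ E c ctr φ x = s(u, v) :=
  sameEdge_iff _ _

lemma E_rel (g : Good c ctr φ adj) {x y : X} (h : clauseRel x y) :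
    E c ctr φ x = E c ctr φ y := by
  obtain ⟨l, ⟨rfl, rfl⟩ | ⟨rfl, rfl⟩ | ⟨rfl, rfl⟩⟩ := h
  · exact (sameEdge_iff _ _).1 (g.rel0 l)
  · exact (sameEdge_iff _ _).1 (g.rel1 l)
  · exact (sameEdge_iff _ _).1 (g.rel2 l)

lemma E_gen (g : Good c ctr φ adj) {x y : X} (h : Relation.EqvGen clauseRel x y) :
    E c ctr φ x = E c ctr φ y := by
  induction h with
  | rel _ _ h => exact E_rel g h
  | refl => rfl
  | symm _ _ _ ih => exact ih.symm
  | trans _ _ _ _ _ ih1 ih2 => exact ih1.trans ih2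

lemma E_inj (g : Good c ctr φ adj) {x y : X} (h : E c ctr φ x = E c ctr φ y) :
    (Quotient.mk (Relation.EqvGen.setoid clauseRel) x) = Quotient.mk _ y := by
  apply Quotient.sound
  rcases g.inj x y ((sameEdge_iff _ _).2 h) with h | h | h
  · subst h; exact Relation.EqvGen.refl _
  · exact Relation.EqvGen.rel _ _ h
  · exact Relation.EqvGen.symm _ _ (Relation.EqvGen.rel _ _ h)

/-- From gadget vertices to edges. -/
def toEdge (g : Good c ctr φ adj) :
    Quotient (Relation.EqvGen.setoid clauseRel) → (gr g).edgeSet :=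
  Quotient.lift (fun x => ⟨E c ctr φ x, g.mem x⟩) (fun _ _ h => Subtype.ext (E_gen g h))

lemma toEdge_bij (g : Good c ctr φ adj) : Function.Bijective (toEdge g) := by
  constructor
  · intro a b
    induction a using Quotient.inductionOn
    induction b using Quotient.inductionOn
    intro h
    exact E_inj g (congrArg Subtype.val h)
  · rintro ⟨e, he⟩
    induction e using Sym2.inductionOn with
    | _ u v =>
      obtain ⟨x, hx⟩ := g.surj u v he
      exact ⟨Quotient.mk _ x, Subtype.ext (E_mk.1 hx)⟩

lemma tri_line (g : Good c ctr φ adj) (x y : X)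
    (h : tri adj (ends c ctr φ x) (ends c ctr φ y)) :
    (TriLine (gr g)).Adj (toEdge g (Quotient.mk _ x)) (toEdge g (Quotient.mk _ y)) := by
  have hx : (gr g).Adj _ _ := g.mem x
  have hy : (gr g).Adj _ _ := g.mem y
  have ex : (toEdge g (Quotient.mk _ x) : Sym2 V) =
    s((ends c ctr φ x).1, (ends c ctr φ x).2) := rfl
  have ey : (toEdge g (Quotient.mk _ y) : Sym2 V) =
    s((ends c ctr φ y).1, (ends c ctr φ y).2) := rfl
  generalize toEdge g (Quotient.mk _ x) = ax at *
  generalize toEdge g (Quotient.mk _ y) = ay at *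
  generalize ends c ctr φ x = p at *
  generalize ends c ctr φ y = q at *
  obtain ⟨p1, p2⟩ := p
  obtain ⟨q1, q2⟩ := q
  simp only [tri] at *
  rcases h with ⟨rfl, h⟩ | ⟨rfl, h⟩ | ⟨rfl, h⟩ | ⟨rfl, h⟩
  · exact ⟨_, _, _, hx, hy, h, ex, ey⟩
  · exact ⟨_, _, _, hx, hy.symm, h, ex, ey.trans Sym2.eq_swap⟩
  · exact ⟨_, _, _, hx.symm, hy, h, ex.trans Sym2.eq_swap, ey⟩
  · exact ⟨_, _, _, hx.symm, hy.symm, h, ex.trans Sym2.eq_swap, ey.trans Sym2.eq_swap⟩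

lemma base_line (g : Good c ctr φ adj) (x y : X) (h : clauseBase.Adj x y) :
    (TriLine (gr g)).Adj (toEdge g (Quotient.mk _ x)) (toEdge g (Quotient.mk _ y)) := by
  obtain ⟨l, a, b, rfl, rfl, h0⟩ := base_elim h
  obtain ⟨i, (⟨rfl, rfl⟩ | ⟨rfl, rfl⟩ | ⟨rfl, rfl⟩) | (⟨rfl, rfl⟩ | ⟨rfl, rfl⟩ | ⟨rfl, rfl⟩)⟩ :=
    sun_adj a b h0
  · exact tri_line g _ _ (g.tri1 l i)
  · exact tri_line g _ _ (g.tri2 l i)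
  · exact tri_line g _ _ (g.tri3 l i)
  · exact (tri_line g _ _ (g.tri1 l i)).symm
  · exact (tri_line g _ _ (g.tri2 l i)).symm
  · exact (tri_line g _ _ (g.tri3 l i)).symm

lemma only' (g : Good c ctr φ adj) {u v w : V} (h1 : adj u v = true) (h2 : adj v w = true)
    (h3 : adj u w = true) : ∃ a b : X, clauseBase.Adj a b ∧ E c ctr φ a = s(u, v) ∧
      E c ctr φ b = s(v, w) := by
  obtain ⟨l, i, h⟩ := g.only u v h1 w h2 h3
  simp only [E_mk] at h
  rcases h with ⟨h, h' | h'⟩ | ⟨h, h' | h'⟩ | ⟨h, h' | h'⟩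
  · exact ⟨_, _, base_adj (sun1 i), h, h'⟩
  · exact ⟨_, _, base_adj (sun2 i).symm, h, h'⟩
  · exact ⟨_, _, base_adj (sun1 i).symm, h, h'⟩
  · exact ⟨_, _, base_adj (sun3 i).symm, h, h'⟩
  · exact ⟨_, _, base_adj (sun2 i), h, h'⟩
  · exact ⟨_, _, base_adj (sun3 i), h, h'⟩

lemma toEdge_rel (g : Good c ctr φ adj) (a b : Quotient (Relation.EqvGen.setoid clauseRel)) :
    (TriLine (gr g)).Adj (toEdge g a) (toEdge g b) ↔ clauseGadget.Adj a b := by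
  constructor
  · intro h
    have hne : a ≠ b := by rintro rfl; exact h.ne rfl
    refine ⟨hne, Or.inl ?_⟩
    induction a using Quotient.inductionOn with | _ x
    induction b using Quotient.inductionOn with | _ y
    obtain ⟨u, v, w, h1, h2, h3, e1, e2⟩ := h
    obtain ⟨p, q, hb, hp, hq⟩ := only' g h1 h2 h3
    exact ⟨p, q, hb, E_inj g (e1.trans hp.symm), E_inj g (e2.trans hq.symm)⟩
  · rintro ⟨-, ⟨x, y, h, rfl, rfl⟩ | ⟨x, y, h, rfl, rfl⟩⟩
    · exact base_line g x y h
    · exact (base_line g x y h).symm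

/-- The isomorphism. -/
noncomputable def iso (g : Good c ctr φ adj) : TriLine (gr g) ≃g clauseGadget :=
  RelIso.symm ⟨Equiv.ofBijective _ (toEdge_bij g), fun {a b} => toEdge_rel g a b⟩

lemma iso_symm (g : Good c ctr φ adj) (e : (gr g).edgeSet) :
    toEdge g (iso g e) = e := (iso g).symm_apply_apply e

lemma iso_mem (g : Good c ctr φ adj) (l : ZMod 3) (a b : V) :
    (∃ e : (gr g).edgeSet, (e : Sym2 V) = s(a, b) ∧ iso g e ∈ clauseSunVerts l) ↔
      ∃ x, E c ctr φ (l, x) = s(a, b) := by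
  constructor
  · rintro ⟨e, he, x, hx⟩
    refine ⟨x, ?_⟩
    rw [← he, ← iso_symm g e, ← hx]; rfl
  · rintro ⟨x, hx⟩
    refine ⟨toEdge g (Quotient.mk _ (l, x)), hx, x, ?_⟩
    exact ((iso g).apply_symm_apply (Quotient.mk _ (l, x))).symm

lemma pre_iso (g : Good c ctr φ adj) (l : ZMod 3) {κ : Type} (K : SimpleGraph κ) (ψ : κ → V)
    (hψ : Function.Injective ψ)
    (h1 : ∀ i j, K.Adj i j → ∃ x, E c ctr φ (l, x) = s(ψ i, ψ j))
    (h2 : ∀ x, ∃ i j, K.Adj i j ∧ E c ctr φ (l, x) = s(ψ i, ψ j))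
    (h3 : ∀ i, ∃ j, K.Adj i j) :
    Nonempty ((edgePre (gr g) (iso g) (clauseSunVerts l)).coe ≃g K) := by
  have hv : ∀ i, ψ i ∈ (edgePre (gr g) (iso g) (clauseSunVerts l)).verts := by
    intro i
    obtain ⟨j, hj⟩ := h3 i
    exact ⟨ψ j, (iso_mem g l _ _).2 (h1 i j hj)⟩
  refine ⟨RelIso.symm ⟨Equiv.ofBijective (fun i => ⟨ψ i, hv i⟩) ⟨?_, ?_⟩, ?_⟩⟩
  · intro i j h
    exact hψ (congrArg Subtype.val h)
  · rintro ⟨v, u, h⟩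
    obtain ⟨x, hx⟩ := (iso_mem g l _ _).1 h
    obtain ⟨i, j, -, hij⟩ := h2 x
    rw [hx, Sym2.eq_iff] at hij
    rcases hij with ⟨h, -⟩ | ⟨h, -⟩
    · exact ⟨i, Subtype.ext h.symm⟩
    · exact ⟨j, Subtype.ext h.symm⟩
  · intro a b
    constructor
    · rintro ⟨-, h⟩
      obtain ⟨x, hx⟩ := (iso_mem g l _ _).1 h
      obtain ⟨i, j, hK, hij⟩ := h2 x
      rw [hx, Sym2.eq_iff] at hij
      rcases hij with ⟨h, h'⟩ | ⟨h, h'⟩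
      · rw [hψ h, hψ h']; exact hK
      · rw [hψ h, hψ h']; exact hK.symm
    · intro h
      have hh := (iso_mem g l _ _).2 (h1 a b h)
      refine ⟨?_, hh⟩
      obtain ⟨e, he, -⟩ := hh
      have := e.2
      rw [he] at this
      exact this

lemma wheel_iso (g : Good c ctr φ adj) (l : ZMod 3) (hl : c l = true) :
    Nonempty ((edgePre (gr g) (iso g) (clauseSunVerts l)).coe ≃g wheelGraph 12) := by
  have k1 : ∀ i, E c ctr φ (l, Sum.inl i) = s(ctr l, φ l i) := by
    intro i; simp [E, ends, hl]
  have k2 : ∀ i, E c ctr φ (l, Sum.inr i) = s(φ l i, φ l (i + 1)) := by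
    intro i; simp [E, ends, hl]
  refine pre_iso g l (wheelGraph 12) (fun o => o.elim (ctr l) (φ l)) ?_ ?_ ?_ ?_
  · rintro (_ | i) (_ | j) h
    · rfl
    · exact absurd h.symm (g.ctrφ l j hl)
    · exact absurd h (g.ctrφ l i hl)
    · exact congrArg some (g.injφ l i j h)
  · have key : ∀ a b : Option (ZMod 12),
        ((∃ i : ZMod 12, a = some i ∧ b = some (i + 1)) ∨ (a = none ∧ b ≠ none)) →
        ∃ x, E c ctr φ (l, x) = s(a.elim (ctr l) (φ l), b.elim (ctr l) (φ l)) := by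
      rintro a b (⟨i, rfl, rfl⟩ | ⟨rfl, h⟩)
      · exact ⟨Sum.inr i, k2 i⟩
      · obtain ⟨j, rfl⟩ := Option.ne_none_iff_exists'.1 h
        exact ⟨Sum.inl j, k1 j⟩
    rintro a b ⟨-, h | h⟩
    · exact key a b h
    · obtain ⟨x, hx⟩ := key b a h
      exact ⟨x, hx.trans Sym2.eq_swap⟩
  · rintro (i | i)
    · exact ⟨none, some i, ⟨by simp, Or.inl (Or.inr ⟨rfl, by simp⟩)⟩, k1 i⟩
    · exact ⟨some i, some (i + 1), ⟨fun h => ne_succ12 i (Option.some.inj h),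
        Or.inl (Or.inl ⟨i, rfl, rfl⟩)⟩, k2 i⟩
  · rintro (_ | i)
    · exact ⟨some 0, by simp, Or.inl (Or.inr ⟨rfl, by simp⟩)⟩
    · exact ⟨none, by simp, Or.inr (Or.inr ⟨rfl, by simp⟩)⟩

lemma ne_succ12' : ∀ i : ZMod 12, i ≠ i + 2 := by decide

lemma square_iso (g : Good c ctr φ adj) (l : ZMod 3) (hl : c l = false) :
    Nonempty ((edgePre (gr g) (iso g) (clauseSunVerts l)).coe ≃g squaredCycleGraph 12) := by
  have k1 : ∀ i, E c ctr φ (l, Sum.inl i) = s(φ l i, φ l (i + 1)) := by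
    intro i; simp [E, ends, hl]
  have k2 : ∀ i, E c ctr φ (l, Sum.inr i) = s(φ l i, φ l (i + 2)) := by
    intro i; simp [E, ends, hl]
  refine pre_iso g l (squaredCycleGraph 12) (φ l) ?_ ?_ ?_ ?_
  · exact fun i j h => g.injφ l i j h
  · rintro a b ⟨-, (rfl | rfl) | (rfl | rfl)⟩
    · exact ⟨_, k1 _⟩
    · exact ⟨_, k2 _⟩
    · exact ⟨_, (k1 _).trans Sym2.eq_swap⟩
    · exact ⟨_, (k2 _).trans Sym2.eq_swap⟩
  · rintro (i | i)
    · exact ⟨i, i + 1, ⟨ne_succ12 i, Or.inl (Or.inl rfl)⟩, k1 i⟩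
    · exact ⟨i, i + 2, ⟨ne_succ12' i, Or.inl (Or.inr rfl)⟩, k2 i⟩
  · exact fun i => ⟨i + 1, ne_succ12 i, Or.inl (Or.inl rfl)⟩

lemma finish [Fintype V] (g : Good c ctr φ adj) :
    ∃ (V : Type) (_ : Fintype V) (G : SimpleGraph V) (f : TriLine G ≃g clauseGadget)
      (S : Finset (ZMod 3)), S.card = (Finset.univ.filter (fun l => c l = true)).card ∧
      ∀ l : ZMod 3,
        (l ∈ S → Nonempty ((edgePre G f (clauseSunVerts l)).coe ≃g wheelGraph 12)) ∧
        (l ∉ S →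
          Nonempty ((edgePre G f (clauseSunVerts l)).coe ≃g squaredCycleGraph 12)) := by
  refine ⟨V, inferInstance, gr g, iso g, Finset.univ.filter (fun l => c l = true), rfl, ?_⟩
  intro l
  constructor
  · intro h
    exact wheel_iso g l (by simpa using h)
  · intro h
    exact square_iso g l (by simpa using h)

end

instance (x y : X) : Decidable (clauseRel x y) := by
  unfold clauseRel; infer_instance

/-- Adjacency from a bit mask. -/
def adjOf (M : ℕ) (u v : Fin 39) : Bool := M.testBit (39 * u.val + v.val)
def phiOf (t : List (Fin 39)) (l : ZMod 3) (i : ZMod 12) : Fin 39 := t.getD (13 * l.val + i.val) 0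
def ctrOf (t : List (Fin 39)) (l : ZMod 3) : Fin 39 := t.getD (13 * l.val + 12) 0
def colOf (w : ℕ) (l : ZMod 3) : Bool := Nat.blt l.val w

def tbl0 : List (Fin 39) :=
  [0, 1, 2, 3, 4, 5, 6, 7, 8, 9, 10, 11, 12, 13, 14, 15, 16, 17, 18, 1, 0, 2, 22, 23, 24, 25, 7, 6, 8, 29, 30, 31, 14, 13, 15, 35, 36, 37, 38]
def mask0 : ℕ :=
  25087353355316177897517572073013832135418684931986243628335694740662484184831594072851285731083058553791349970047618840172376743810223342382509423413314529577145799537219501893403217812582689518456638698304448451953603620224200022291017531246791924120004235723534367935810125154752315734774966083833605096958079336609782815554054713892713280764156778848204612546492962179673994351465826746320146009813744029075779200448209559424257607513577622534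

lemma good0 : Good (colOf 0) (ctrOf tbl0) (phiOf tbl0) (adjOf mask0) := by
  constructor <;> decide +kernel

def tbl1 : List (Fin 39) :=
  [0, 1, 2, 3, 4, 5, 6, 7, 8, 9, 10, 11, 12, 13, 14, 15, 16, 17, 18, 12, 0, 1, 22, 23, 24, 25, 12, 6, 7, 29, 30, 31, 14, 13, 15, 35, 36, 37, 38]
def mask1 : ℕ :=
  25087354321045474806870304266576646883881441190725474948067377816440976605095974376287117239369289297865849689569081751386224850627553153831138280720286847425165975325251190616942866643471256513656390275503612594670105984421901964084260182964163301256788233812665255004815781169430837355532032667066019041215189574391761265270077326898268749885195596026344637529070979908293716125067633435674685853306435314473476873514590452906550722720142989314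

lemma good1 : Good (colOf 1) (ctrOf tbl1) (phiOf tbl1) (adjOf mask1) := by
  constructor <;> decide +kernel

def tbl2 : List (Fin 39) :=
  [0, 1, 2, 3, 4, 5, 6, 7, 8, 9, 10, 11, 12, 13, 14, 15, 16, 17, 18, 12, 1, 21, 22, 23, 24, 0, 12, 6, 7, 29, 30, 31, 0, 13, 14, 35, 36, 37, 38]
def mask2 : ℕ :=
  25087354321045474799617034144163628614705756459658896818199600833536146535756247456613598322817516119350406123185683834967772283046846985047607730594523758799459873810672050806493948701387965272081839206566395799796613744606307354266240905731415315888043280788676157152166706744437735206289944874748181999538344197488729181239811595309371971740074842613109454030317031908393351801149428488489866476117250266775285702606013485214819693925168052226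

lemma good2 : Good (colOf 2) (ctrOf tbl2) (phiOf tbl2) (adjOf mask2) := by
  constructor <;> decide +kernel
end ClauseAux

/-- For each `w ∈ {0, 1, 2}`, the clause gadget admits a preimage in which exactly `w`
of the three 12-suns have 12-wheel preimages and the remaining ones have squared
12-cycle preimages. -/
theorem clauseGadget_realizable (w : ℕ) (hw : w ≤ 2) :
    ∃ (V : Type) (_ : Fintype V) (G : SimpleGraph V) (f : TriLine G ≃g clauseGadget)
      (S : Finset (ZMod 3)), S.card = w ∧
      ∀ l : ZMod 3,
        (l ∈ S → Nonempty ((edgePre G f (clauseSunVerts l)).coe ≃g wheelGraph 12)) ∧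
        (l ∉ S →
          Nonempty ((edgePre G f (clauseSunVerts l)).coe ≃g squaredCycleGraph 12)) := by
  obtain rfl | rfl | rfl : w = 0 ∨ w = 1 ∨ w = 2 := by omega
  · exact ClauseAux.finish ClauseAux.good0
  · exact ClauseAux.finish ClauseAux.good1
  · exact ClauseAux.finish ClauseAux.good2
end

section
/- Let G be a finite simple graph such that every edge of T(G) lies in exactly one triangle of T(G). Then G contains no clique of size four, i.e., G has no subgraph isomorphic to K₄. -/
open SimpleGraph

/-- If every edge of `T(G)` lies in exactly one triangle of `T(G)`, then `G` contains
no clique of size four. -/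
theorem no_K4_of_triLine_edges_in_unique_triangle {V : Type} [Fintype V]
    (G : SimpleGraph V)
    (h : ∀ e₁ e₂ : G.edgeSet, (TriLine G).Adj e₁ e₂ →
      ∃! e₃ : G.edgeSet, (TriLine G).Adj e₁ e₃ ∧ (TriLine G).Adj e₂ e₃) :
    ¬ HasSubgraphIso (completeGraph (Fin 4)) G := by
  rintro ⟨f, hf, hadj⟩
  have A : ∀ i j : Fin 4, i ≠ j → G.Adj (f i) (f j) := fun i j hij => hadj i j hij
  have T : ∀ u v w : V, ∀ (huv : G.Adj u v) (e₁ e₂ : G.edgeSet), G.Adj v w → G.Adj u w →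
      (e₁ : Sym2 V) = s(u, v) → (e₂ : Sym2 V) = s(v, w) → (TriLine G).Adj e₁ e₂ :=
    fun u v w huv e₁ e₂ hvw huw h₁ h₂ => ⟨u, v, w, huv, hvw, huw, h₁, h₂⟩
  have h01 := A 0 1 (by decide)
  have h02 := A 0 2 (by decide)
  have h03 := A 0 3 (by decide)
  have h12 := A 1 2 (by decide)
  have h13 := A 1 3 (by decide)
  have h23 := A 2 3 (by decide)
  let ab : G.edgeSet := ⟨s(f 0, f 1), h01⟩
  let bc : G.edgeSet := ⟨s(f 1, f 2), h12⟩
  let ac : G.edgeSet := ⟨s(f 0, f 2), h02⟩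
  let bd : G.edgeSet := ⟨s(f 1, f 3), h13⟩
  have key := (h ab bc (T _ _ _ h01 _ _ h12 h02 rfl rfl)).unique
    (y₁ := ac) (y₂ := bd)
    ⟨T _ _ _ h01.symm _ _ h02 h12 Sym2.eq_swap rfl,
      T _ _ _ h12 _ _ h02.symm h01.symm rfl Sym2.eq_swap⟩
    ⟨T _ _ _ h01 _ _ h13 h03 rfl rfl,
      T _ _ _ h12.symm _ _ h13 h23 Sym2.eq_swap rfl⟩
  have key2 : s(f 0, f 2) = s(f 1, f 3) := congrArg Subtype.val key
  rw [Sym2.eq_iff] at key2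
  rcases key2 with ⟨h', _⟩ | ⟨h', _⟩
  · exact h01.ne h'
  · exact h03.ne h'
end
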